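/- arXiv:1608.01144 — 5 statements merged into one kernel-verified Lean document; each statement's English description precedes it below -/
import Mathlib

section
/- Let A be an n×n symmetric matrix with integer entries, and let Δ_A denote the discriminant of A. If Δ_A is odd and square-free, then for every n×n rational orthogonal matrix Q such that Q^T A Q is again a symmetric integer matrix, Q is a signed permutation matrix. -/
/-!
Let `φ` be the characteristic polynomial of `A`; up to sign the discriminant is the norm of `φ'`
in `ℤ[x]/(φ)`, which equals `det φ'(A)` (`norm_mk_charpoly`). If `Q` is not integral, let `l` be
the least positive integer with `U = lQ` integral and let `p` be a prime factor of `l`; then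
`U` is nonzero modulo `p`. It is shown that `p²` divides `det φ'(A)`, so that the discriminant
is not square-free.

With `B = QᵀAQ` integral, `AU = UB` and `UᵀU = l²`, so modulo `p` the column space `W` of `U`
is `A`-invariant and totally isotropic. Factor `φ = χ₁χ₂` modulo `p`, with `χ₁` and `χ₂` the
characteristic polynomials of `A` on `W` and on the quotient by `W`. By Cayley–Hamilton,
`χ₁(A)` kills `W` and `χ₂(A)` maps everything into `W`; as `A` is self-adjoint and `W` is
isotropic, `χ₂(A)` kills `W` too. Hence so does `φ'(A) = χ₁'(A)χ₂(A) + χ₁(A)χ₂'(A)`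
(`aeval_derivative_charpoly_mul_eq_zero`).

Let `N = φ'(A)` and let `v` be a column of `U` that is nonzero modulo `p`. Then `Nv ≡ 0` modulo
`p`, while `UᵀNU = UᵀUφ'(B) = l²φ'(B)` gives `vᵀNv ≡ 0` modulo `p²`. Writing the form `N` in a
basis containing `v` makes `p²` divide `det N` (`sq_dvd_det`). So `Q` is integral, and an
integral orthogonal matrix is a signed permutation matrix. The argument treats `p = 2` in the
same way as odd `p`.
-/

open Polynomial Matrix

/-- The discriminant of an `n × n` integer matrix `A`:
`Δ_A = (-1)^(n(n-1)/2) · res(φ, φ')`, where `φ` is the (monic) characteristic polynomial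
of `A`.  Since `φ` is monic, the resultant `res(φ, φ')` equals the norm of the image of
`φ'` in the quotient ring `ℤ[x]/(φ)`. -/
noncomputable def matrixDisc {n : ℕ} (A : Matrix (Fin n) (Fin n) ℤ) : ℤ :=
  (-1) ^ (n * (n - 1) / 2) *
    Algebra.norm ℤ (AdjoinRoot.mk A.charpoly (Polynomial.derivative A.charpoly))

/-- A rational matrix is an integer matrix if all its entries are integers. -/
def IsIntegerMatrix {n : ℕ} (M : Matrix (Fin n) (Fin n) ℚ) : Prop :=
  ∀ i j, ∃ z : ℤ, M i j = (z : ℚ)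

/-- A signed permutation matrix: each row and column has exactly one nonzero entry,
equal to `±1`. -/
def IsSignedPermMatrix {n : ℕ} (Q : Matrix (Fin n) (Fin n) ℚ) : Prop :=
  ∃ (σ : Equiv.Perm (Fin n)) (ε : Fin n → ℚ), (∀ j, ε j = 1 ∨ ε j = -1) ∧
    ∀ i j, Q i j = if i = σ j then ε j else 0

/-- A permutation matrix. -/
def IsPermMatrix {n : ℕ} (Q : Matrix (Fin n) (Fin n) ℚ) : Prop :=
  ∃ σ : Equiv.Perm (Fin n), ∀ i j, Q i j = if i = σ j then 1 else 0

/-- `ℓ` is the level of the rational matrix `Q`, i.e. the smallest positive integer `ℓ`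
such that `ℓ • Q` is an integer matrix. -/
def IsLevel {n : ℕ} (Q : Matrix (Fin n) (Fin n) ℚ) (ℓ : ℕ) : Prop :=
  0 < ℓ ∧ IsIntegerMatrix ((ℓ : ℚ) • Q) ∧
    ∀ m : ℕ, 0 < m → IsIntegerMatrix ((m : ℚ) • Q) → ℓ ≤ m

/-- The walk matrix `W = [e, Ae, …, A^{n-1}e]` of a graph, where `e` is the all-ones
vector. -/
def walkMatrix {n : ℕ} (G : SimpleGraph (Fin n)) [DecidableRel G.Adj] :
    Matrix (Fin n) (Fin n) ℤ :=
  Matrix.of fun i j => ((G.adjMatrix ℤ ^ (j : ℕ)) *ᵥ fun _ => 1) i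

/-- Two graphs have the same generalized spectrum: their adjacency matrices are
cospectral, and the adjacency matrices of their complements are cospectral. -/
def GenCospectral {n : ℕ} (G H : SimpleGraph (Fin n))
    [DecidableRel G.Adj] [DecidableRel H.Adj] : Prop :=
  (G.adjMatrix ℤ).charpoly = (H.adjMatrix ℤ).charpoly ∧
    (Gᶜ.adjMatrix ℤ).charpoly = (Hᶜ.adjMatrix ℤ).charpoly

/-- `G` is determined by its generalized spectrum: every graph with the same
generalized spectrum as `G` is isomorphic to `G`. -/
def IsDGS {n : ℕ} (G : SimpleGraph (Fin n)) [DecidableRel G.Adj] : Prop :=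
  ∀ (H : SimpleGraph (Fin n)) [DecidableRel H.Adj], GenCospectral G H → Nonempty (G ≃g H)

/-- Membership in the set `𝒬_G` of rational orthogonal matrices `Q` with `Qe = e`
such that `QᵀAQ` is a `(0,1)`-matrix, where `A` is the adjacency matrix of `G`. -/
def MemQG {n : ℕ} (G : SimpleGraph (Fin n)) [DecidableRel G.Adj]
    (Q : Matrix (Fin n) (Fin n) ℚ) : Prop :=
  Qᵀ * Q = 1 ∧ (Q *ᵥ fun _ => 1) = (fun _ => 1) ∧
    ∀ i j, (Qᵀ * G.adjMatrix ℚ * Q) i j = 0 ∨ (Qᵀ * G.adjMatrix ℚ * Q) i j = 1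

/-! ### Polynomials in intertwined and in symmetric matrices -/

lemma aeval_intertwine {R M M' : Type*} [CommRing R] [AddCommGroup M] [Module R M]
    [AddCommGroup M'] [Module R M'] (f : Module.End R M) (f' : Module.End R M')
    (g : M →ₗ[R] M') (h : ∀ x, g (f x) = f' (g x)) (p : R[X]) (x : M) :
    g (aeval f p x) = aeval f' p (g x) := by
  induction p using Polynomial.induction_on' generalizing x with
  | add p q hp hq => simp [hp, hq]
  | monomial k a =>
    have hk : ∀ x, g ((f ^ k) x) = (f' ^ k) (g x) := by
      induction k with
      | zero => simp
      | succ k ih => intro x; simp [pow_succ, ih, h]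
    simp [aeval_monomial, hk, Module.algebraMap_end_apply]

lemma aeval_mul_intertwine {n R : Type*} [Fintype n] [DecidableEq n] [CommRing R]
    {A B U : Matrix n n R} (h : A * U = U * B) (p : R[X]) :
    aeval A p * U = U * aeval B p := by
  induction p using Polynomial.induction_on' with
  | add p q hp hq => simp [add_mul, mul_add, hp, hq]
  | monomial k a =>
    have hk : A ^ k * U = U * B ^ k := by
      induction k with
      | zero => simp
      | succ k ih => rw [pow_succ, mul_assoc, h, ← mul_assoc, ih, mul_assoc, pow_succ]
    simp [aeval_monomial, hk, Algebra.algebraMap_eq_smul_one]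

lemma aeval_isSymm {n R : Type*} [Fintype n] [DecidableEq n] [CommRing R]
    {A : Matrix n n R} (hA : A.IsSymm) (p : R[X]) : (aeval A p).IsSymm := by
  induction p using Polynomial.induction_on' with
  | add p q hp hq => simpa using hp.add hq
  | monomial k a =>
    simpa [aeval_monomial, Algebra.algebraMap_eq_smul_one] using (hA.pow k).smul a

/-! ### Isotropic invariant subspaces over a field -/

open Module.Basis in
/-- The characteristic polynomial of an endomorphism is multiplicative along an invariant
subspace: its matrix in a basis adapted to the subspace is block triangular. -/
lemma charpoly_eq_restrict_mul_mapQ {K V : Type*} [Field K] [AddCommGroup V] [Module K V]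
    [Module.Finite K V] (W : Submodule K V) (e : V →ₗ[K] V) (he : W ≤ W.comap e) :
    e.charpoly = (e.restrict he).charpoly * (W.mapQ W e he).charpoly := by
  let m := Module.Free.ChooseBasisIndex K W
  let bW : Module.Basis m K W := Module.Free.chooseBasis K W
  let n := Module.Free.ChooseBasisIndex K (V ⧸ W)
  let bQ : Module.Basis n K (V ⧸ W) := Module.Free.chooseBasis K (V ⧸ W)
  let b := sumQuot bW bQ
  let A : Matrix m m K := LinearMap.toMatrix bW bW (e.restrict he)
  let B : Matrix m n K := Matrix.of fun i l ↦
    ((sumQuot bW bQ).repr (e ((sumQuot bW bQ) (Sum.inr l)))) (Sum.inl i)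
  let D : Matrix n n K := LinearMap.toMatrix bQ bQ (W.mapQ W e he)
  suffices LinearMap.toMatrix b b e = Matrix.fromBlocks A B 0 D by
    rw [← LinearMap.charpoly_toMatrix e b, this, ← LinearMap.charpoly_toMatrix _ bW,
      ← LinearMap.charpoly_toMatrix _ bQ, Matrix.charpoly_fromBlocks_zero₂₁]
  ext u v
  cases u with
  | inl i =>
    cases v with
    | inl k =>
      simp only [b, sumQuot_inl, Matrix.fromBlocks_apply₁₁, A, LinearMap.toMatrix_apply]
      apply sumQuot_repr_inl_of_mem
    | inr l => simp [b, LinearMap.toMatrix_apply, Matrix.fromBlocks_apply₁₂, B]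
  | inr j =>
    cases v with
    | inl k =>
      suffices W.mkQ (e (bW k)) = 0 by simp [LinearMap.toMatrix_apply, b, this]
      rw [← LinearMap.mem_ker, Submodule.ker_mkQ]
      exact he (Submodule.coe_mem (bW k))
    | inr l =>
      simp only [LinearMap.toMatrix_apply, sumQuot_repr_inr,
        Matrix.fromBlocks_apply₂₂, b, D]
      rw [← sumQuot_inr bW bQ l, W.mapQ_apply]
      simp

/-- The two factors are the characteristic polynomials of `A` on the column space `W` of `U`,
where Cayley–Hamilton makes the first vanish, and on the quotient by `W`, where Cayley–Hamilton
says that the second maps the whole space into `W`. -/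
lemma exists_charpoly_factor {n K : Type*} [Fintype n] [DecidableEq n] [Field K]
    {A B U : Matrix n n K} (h : A * U = U * B) :
    ∃ (p q : K[X]) (C : Matrix n n K), A.charpoly = p * q ∧ aeval A p * U = 0 ∧
      aeval A q = U * C := by
  set W := LinearMap.range (Matrix.toLin' U)
  have he : W ≤ W.comap (Matrix.toLin' A) := by
    rintro _ ⟨x, rfl⟩
    exact ⟨B *ᵥ x, by simp [h]⟩
  have haev : ∀ (p : K[X]) (x : n → K),
      aeval (Matrix.toLin' A) p x = aeval A p *ᵥ x := by
    intro p x
    have := aeval_algHom_apply (Matrix.toLinAlgEquiv' (R := K) (n := n)).toAlgHom A p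
    exact congrArg (fun f : (n → K) →ₗ[K] (n → K) => f x) this
  have hmem : ∀ x, U *ᵥ x ∈ W := fun x => ⟨x, rfl⟩
  set r := (Matrix.toLin' A).restrict (p := W) (q := W) he
  set s := W.mapQ W (Matrix.toLin' A) he
  have h2 : ∀ x, aeval A s.charpoly *ᵥ x ∈ W := by
    intro x
    have := aeval_intertwine (Matrix.toLin' A) s W.mkQ (fun x => by simp [s]) s.charpoly x
    rw [LinearMap.aeval_self_charpoly, haev] at this
    simpa using this
  choose c hc using h2
  refine ⟨r.charpoly, s.charpoly, Matrix.of fun i j => c (Pi.single j 1) i, ?_, ?_, ?_⟩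
  · rw [← Matrix.charpoly_toLin', charpoly_eq_restrict_mul_mapQ W _ he]
  · apply Matrix.ext_of_mulVec_single
    intro j
    have := aeval_intertwine r (Matrix.toLin' A) W.subtype (fun x => rfl) r.charpoly
      ⟨_, hmem (Pi.single j 1)⟩
    rw [LinearMap.aeval_self_charpoly, haev] at this
    rw [← Matrix.mulVec_mulVec]
    rw [Matrix.zero_mulVec]
    exact this.symm
  · apply Matrix.ext_of_mulVec_single
    intro j
    rw [← hc, ← Matrix.mulVec_mulVec, Matrix.toLin'_apply]
    congr 1
    ext i
    simp

/-- If the column space of `U` is `A`-invariant and totally isotropic, both factors of the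
characteristic polynomial vanish on it, the second one because `A` is self-adjoint;
so does the derivative of their product. -/
lemma aeval_derivative_charpoly_mul_eq_zero {n K : Type*} [Fintype n] [DecidableEq n] [Field K]
    {A B U : Matrix n n K} (hA : A.IsSymm) (h : A * U = U * B) (hU : Uᵀ * U = 0) :
    aeval A (derivative A.charpoly) * U = 0 := by
  obtain ⟨p, q, C, hpq, hp, hq⟩ := exists_charpoly_factor h
  have hq' : aeval A q * U = 0 := by
    rw [← (aeval_isSymm hA q).eq, hq, Matrix.transpose_mul, mul_assoc, hU, mul_zero]
  have hqp : aeval A (derivative p) * aeval A q * U = 0 := by rw [mul_assoc, hq', mul_zero]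
  have hpq' : aeval A p * aeval A (derivative q) * U = 0 := by
    rw [← map_mul, mul_comm p, map_mul, mul_assoc, hp, mul_zero]
  rw [hpq, derivative_mul, map_add, map_mul, map_mul, add_mul, hqp, hpq', add_zero]

/-! ### The discriminant as a determinant -/

lemma det_aeval_X_sub_C {n R : Type*} [Fintype n] [DecidableEq n] [CommRing R]
    (L : Matrix n n R) (a : R) :
    (aeval L (X - C a)).det = (-1) ^ Fintype.card n * L.charpoly.eval a := by
  rw [Matrix.eval_charpoly, ← Matrix.det_neg, neg_sub]
  simp [Matrix.algebraMap_eq_diagonal, Pi.algebraMap_def]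

/-- After splitting `f`, each linear factor of `f` contributes to `det f(M)` a value of the
characteristic polynomial of `M`. -/
lemma det_aeval_eq_of_charpoly_eq_of_isAlgClosed {m n K : Type*} [Fintype m] [DecidableEq m]
    [Fintype n] [DecidableEq n] [Field K] [IsAlgClosed K] {M : Matrix m m K} {N : Matrix n n K}
    (h : M.charpoly = N.charpoly) (f : K[X]) : (aeval M f).det = (aeval N f).det := by
  have hcard : Fintype.card m = Fintype.card n := by
    rw [← M.charpoly_natDegree_eq_dim, h, N.charpoly_natDegree_eq_dim]
  have hprod : ∀ s : Multiset K, (aeval M (s.map (X - C ·)).prod).det =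
      (aeval N (s.map (X - C ·)).prod).det := by
    intro s
    induction s using Multiset.induction with
    | empty => simp
    | cons a s ih =>
      rw [Multiset.map_cons, Multiset.prod_cons, map_mul, map_mul, Matrix.det_mul,
        Matrix.det_mul, ih, det_aeval_X_sub_C, det_aeval_X_sub_C, hcard, h]
  rw [(IsAlgClosed.splits f).eq_prod_roots, map_mul, map_mul, Matrix.det_mul, Matrix.det_mul,
    hprod, aeval_C, aeval_C, Algebra.algebraMap_eq_smul_one, Algebra.algebraMap_eq_smul_one,
    Matrix.det_smul, Matrix.det_smul, Matrix.det_one, Matrix.det_one, hcard]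

lemma map_aeval {n R S : Type*} [Fintype n] [DecidableEq n] [CommRing R] [CommRing S]
    (i : R →+* S) (L : Matrix n n R) (f : R[X]) :
    (aeval L f).map i = aeval (L.map i) (f.map i) := by
  induction f using Polynomial.induction_on' with
  | add p q hp hq => simp [Matrix.map_add, hp, hq]
  | monomial k a =>
    simp [aeval_monomial, Algebra.algebraMap_eq_smul_one, ← Matrix.map_pow]
    ext
    simp

lemma det_aeval_eq_of_charpoly_eq {m n : Type*} [Fintype m] [DecidableEq m] [Fintype n]
    [DecidableEq n] {M : Matrix m m ℤ} {N : Matrix n n ℤ}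
    (h : M.charpoly = N.charpoly) (f : ℤ[X]) : (aeval M f).det = (aeval N f).det := by
  let i : ℤ →+* AlgebraicClosure ℚ := Int.castRingHom _
  apply RingHom.injective_int i
  rw [RingHom.map_det, RingHom.map_det, RingHom.mapMatrix_apply, RingHom.mapMatrix_apply,
    map_aeval, map_aeval]
  apply det_aeval_eq_of_charpoly_eq_of_isAlgClosed
  rw [Matrix.charpoly_map, Matrix.charpoly_map, h]

/-- Multiplication by the root of `φ` on `ℤ[x]/(φ)` is given by an integer matrix with
characteristic polynomial `φ`, the same as that of `A`. -/
lemma norm_mk_charpoly {n : ℕ} (A : Matrix (Fin n) (Fin n) ℤ) (f : ℤ[X]) :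
    Algebra.norm ℤ (AdjoinRoot.mk A.charpoly f) = (aeval A f).det := by
  have hm := A.charpoly_monic
  let pb := AdjoinRoot.powerBasis' hm
  have hgen : pb.gen = AdjoinRoot.root A.charpoly := AdjoinRoot.powerBasis'_gen hm
  have hmin : minpoly ℤ pb.gen = A.charpoly := by
    have hint : IsIntegral ℤ pb.gen := pb.isIntegral_gen
    refine (Polynomial.eq_of_monic_of_dvd_of_natDegree_le hm (minpoly.monic hint) ?_ ?_)
    · rw [← AdjoinRoot.mk_eq_zero, ← AdjoinRoot.aeval_eq, ← hgen, minpoly.aeval]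
    · rw [pb.natDegree_minpoly]; rfl
  rw [Algebra.norm_eq_matrix_det pb.basis, ← AdjoinRoot.aeval_eq, ← hgen, ← aeval_algHom_apply]
  exact det_aeval_eq_of_charpoly_eq ((charpoly_leftMulMatrix pb).trans hmin) f

/-! ### Square divisors of the determinant of a quadratic form -/

/-- In a basis containing `v`, which is available up to an index prime to `p`, the quadratic
form `N` has the row and the column of `v` divisible by `p` and their common entry divisible
by `p²`. -/
lemma sq_dvd_det {n : ℕ} (N : Matrix (Fin n) (Fin n) ℤ) (hN : N.IsSymm) (v : Fin n → ℤ)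
    (p : ℤ) (hp : Prime p) (i : Fin n) (hi : ¬ p ∣ v i) (hv : ∀ k, p ∣ (N *ᵥ v) k)
    (hvv : p ^ 2 ∣ v ⬝ᵥ (N *ᵥ v)) : p ^ 2 ∣ N.det := by
  -- replace the `i`-th standard basis vector by `v`
  set P := (1 : Matrix (Fin n) (Fin n) ℤ).updateCol i v
  have hP : P.det = v i := by
    rw [← Matrix.cramer_apply, Matrix.cramer_one]; rfl
  have hPi : P *ᵥ Pi.single i 1 = v := by
    ext k; simp [P]
  set M := Pᵀ * N * P
  have hM : M.IsSymm := by
    simp [M, Matrix.IsSymm, Matrix.transpose_mul, hN.eq, mul_assoc]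
  have hcol : ∀ k, M k i = (Pᵀ *ᵥ (N *ᵥ v)) k := by
    intro k
    rw [← hPi, Matrix.mulVec_mulVec, Matrix.mulVec_mulVec]
    simp [M, mul_assoc]
  have hMcol : ∀ k, p ∣ M k i := fun k => by
    rw [hcol, Matrix.mulVec, dotProduct]
    exact Finset.dvd_sum fun j _ => (hv j).mul_left (Pᵀ k j)
  have hMii : p ^ 2 ∣ M i i := by
    rw [hcol]
    convert hvv using 1
    simp [Matrix.mulVec, P, dotProduct]
  have hMdet : p ^ 2 ∣ M.det := by
    rw [Matrix.det_apply]
    refine Finset.dvd_sum fun σ _ => Dvd.dvd.mul_left ?_ _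
    by_cases hσ : σ i = i
    · refine hMii.trans ?_
      have := Finset.dvd_prod_of_mem (fun k => M (σ k) k) (Finset.mem_univ i)
      simpa [hσ] using this
    -- the entries of the permutation in row `i` and in column `i` are distinct
    · have hne : σ.symm i ≠ i := fun h => hσ (σ.symm_apply_eq.1 h).symm
      rw [← Finset.mul_prod_erase _ _ (Finset.mem_univ i),
        ← Finset.mul_prod_erase _ _ (Finset.mem_erase.2 ⟨hne, Finset.mem_univ _⟩), ← mul_assoc,
        sq]
      refine Dvd.dvd.mul_right (mul_dvd_mul (hMcol _) ?_) _
      rw [Equiv.apply_symm_apply, ← hM.apply]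
      exact hMcol _
  have : M.det = N.det * (v i) ^ 2 := by
    simp only [M, Matrix.det_mul, Matrix.det_transpose, hP]; ring
  rw [this] at hMdet
  have hcop : IsCoprime p (v i) := (Prime.coprime_iff_not_dvd hp).2 hi
  exact hcop.pow.dvd_of_dvd_mul_right hMdet

/-! ### Integrality of matrices -/

/-- Integer orthogonal matrices are signed permutations. -/
lemma signedPerm_of_integer {n : ℕ} (Q : Matrix (Fin n) (Fin n) ℚ) (hQ : Qᵀ * Q = 1)
    (hint : IsIntegerMatrix Q) : IsSignedPermMatrix Q := by
  choose z hz using hint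
  have horth : ∀ j k, ∑ i, z i j * z i k = if j = k then 1 else 0 := by
    intro j k
    have := congrFun (congrFun hQ j) k
    simp only [Matrix.mul_apply, Matrix.transpose_apply, hz, Matrix.one_apply] at this
    exact_mod_cast this
  have hex : ∀ j, ∃ i, z i j ≠ 0 := by
    intro j
    by_contra! h
    simpa [h] using horth j j
  choose σ hσ using hex
  -- a sum of integer squares equal to `1` has a single nonzero term
  have hcol : ∀ j, z (σ j) j ^ 2 = 1 ∧ ∀ i, i ≠ σ j → z i j = 0 := by
    intro j
    have h1 : ∑ i, z i j ^ 2 = 1 := by simpa [sq] using horth j j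
    rw [← Finset.add_sum_erase _ _ (Finset.mem_univ (σ j))] at h1
    have h2 : 0 < z (σ j) j ^ 2 := by have := hσ j; positivity
    have h3 : 0 ≤ ∑ i ∈ Finset.univ.erase (σ j), z i j ^ 2 :=
      Finset.sum_nonneg fun i _ => sq_nonneg _
    have h4 : ∑ i ∈ Finset.univ.erase (σ j), z i j ^ 2 = 0 := by omega
    refine ⟨by omega, fun i hi => ?_⟩
    rw [Finset.sum_eq_zero_iff_of_nonneg fun i _ => sq_nonneg _] at h4
    simpa using h4 i (by simp [hi])
  have hinj : Function.Injective σ := by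
    intro j k hjk
    by_contra hne
    have h := horth j k
    rw [if_neg hne, Finset.sum_eq_single (σ j) (fun i _ hi => by simp [(hcol j).2 i hi])
      (by simp)] at h
    rcases mul_eq_zero.1 h with h | h
    · exact hσ j h
    · exact hσ k (hjk ▸ h)
  refine ⟨Equiv.ofBijective σ (Finite.injective_iff_bijective.1 hinj), fun j => z (σ j) j,
    fun j => ?_, fun i j => ?_⟩
  · have := sq_eq_sq_iff_eq_or_eq_neg.1 ((hcol j).1.trans (one_pow 2).symm)
    beta_reduce
    exact_mod_cast this
  · rw [hz, Equiv.ofBijective_apply]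
    split_ifs with h
    · rw [h]
    · rw [(hcol j).2 i h, Int.cast_zero]

lemma exists_pos_smul_isInteger {n : ℕ} (Q : Matrix (Fin n) (Fin n) ℚ) :
    ∃ l : ℕ, 0 < l ∧ IsIntegerMatrix ((l : ℚ) • Q) := by
  refine ⟨∏ i, ∏ j, (Q i j).den, Finset.prod_pos fun i _ => Finset.prod_pos fun j _ => (Q i j).pos,
    fun i j => ?_⟩
  obtain ⟨c, hc⟩ : (Q i j).den ∣ ∏ i, ∏ j, (Q i j).den :=
    (Finset.dvd_prod_of_mem (fun j => (Q i j).den) (Finset.mem_univ j)).trans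
      (Finset.dvd_prod_of_mem (fun i => ∏ j, (Q i j).den) (Finset.mem_univ i))
  refine ⟨c * (Q i j).num, ?_⟩
  rw [hc, Matrix.smul_apply, smul_eq_mul]
  push_cast
  rw [mul_right_comm, Rat.den_mul_eq_num, mul_comm]

/-! ### The discriminant and primes in the denominator of `Q` -/

/-- Modulo `p` the column space of `U` is `A`-invariant and totally isotropic, so
`N = φ'(A)` kills it modulo `p`. Moreover `Uᵀ N U = l² φ'(B)`, so a column `v` of `U` with
`p ∤ v i` also satisfies `p² ∣ vᵀ N v`. -/
lemma sq_dvd_det_aeval_derivative {n : ℕ} {A B U : Matrix (Fin n) (Fin n) ℤ} (hA : A.IsSymm)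
    (h : A * U = U * B) {p : ℕ} (hp : p.Prime) {l : ℤ} (hl : (p : ℤ) ∣ l)
    (hU : Uᵀ * U = l ^ 2 • (1 : Matrix (Fin n) (Fin n) ℤ)) {i j : Fin n}
    (hij : ¬ (p : ℤ) ∣ U i j) :
    (p : ℤ) ^ 2 ∣ (aeval A (derivative A.charpoly)).det := by
  have : Fact p.Prime := ⟨hp⟩
  set N := aeval A (derivative A.charpoly)
  have hNU : N * U = U * aeval B (derivative A.charpoly) := aeval_mul_intertwine h _
  let r := Int.castRingHom (ZMod p)
  have hl0 : r l = 0 := (ZMod.intCast_zmod_eq_zero_iff_dvd l p).2 hl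
  have hNr : (N * U).map r = 0 := by
    rw [Matrix.map_mul, map_aeval, ← derivative_map, ← Matrix.charpoly_map]
    refine aeval_derivative_charpoly_mul_eq_zero (B := B.map r) ?_ ?_ ?_
    · exact hA.map r
    · rw [← Matrix.map_mul, ← Matrix.map_mul, h]
    · rw [← Matrix.transpose_map, ← Matrix.map_mul, hU]
      ext a b
      rw [Matrix.map_apply, Matrix.smul_apply, smul_eq_mul, map_mul, map_pow, hl0]
      simp
  refine sq_dvd_det N (aeval_isSymm hA _) (fun k => U k j) p (Nat.prime_iff_prime_int.1 hp) i hij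
    (fun k => ?_) ?_
  · exact (ZMod.intCast_zmod_eq_zero_iff_dvd _ p).1 (congrFun (congrFun hNr k) j)
  · have hent : (fun k => U k j) ⬝ᵥ (N *ᵥ fun k => U k j) = (Uᵀ * (N * U)) j j := rfl
    rw [hent, hNU, ← mul_assoc, hU, smul_mul_assoc, one_mul, Matrix.smul_apply, smul_eq_mul]
    exact (pow_dvd_pow_of_dvd hl 2).mul_right _

/-- **Theorem 1.6.** Let `A` be an `n × n` symmetric integer matrix whose discriminant
`Δ_A` is odd and square-free.  Then every rational orthogonal matrix `Q` such that
`QᵀAQ` is again a (symmetric) integer matrix is a signed permutation matrix. -/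
theorem oddSquarefreeDisc_imp_signedPerm {n : ℕ} (A : Matrix (Fin n) (Fin n) ℤ)
    (hA : A.IsSymm) (hodd : Odd (matrixDisc A)) (hsf : Squarefree (matrixDisc A))
    (Q : Matrix (Fin n) (Fin n) ℚ) (hQ : Qᵀ * Q = 1)
    (hint : IsIntegerMatrix (Qᵀ * A.map (Int.cast : ℤ → ℚ) * Q)) :
    IsSignedPermMatrix Q := by
  classical
  apply signedPerm_of_integer Q hQ
  have hex := exists_pos_smul_isInteger Q
  obtain ⟨hlpos, hlint⟩ := Nat.find_spec hex
  have hlmin := fun m => Nat.find_min (m := m) hex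
  set l := Nat.find hex
  by_cases hl1 : l = 1
  · simpa [hl1] using hlint
  exfalso
  obtain ⟨p, hp, q, hq⟩ := Nat.exists_prime_and_dvd hl1
  have hlq : (l : ℚ) = p * q := by rw [hq]; push_cast; rfl
  have hp0 : (p : ℚ) ≠ 0 := by exact_mod_cast hp.ne_zero
  choose u hu using hlint
  choose b hb using hint
  let U : Matrix (Fin n) (Fin n) ℤ := Matrix.of u
  let B : Matrix (Fin n) (Fin n) ℤ := Matrix.of b
  let c : ℤ →+* ℚ := Int.castRingHom ℚ
  have hc : Function.Injective (fun M : Matrix (Fin n) (Fin n) ℤ => M.map c) :=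
    Matrix.map_injective Int.cast_injective
  have hUQ : U.map c = (l : ℚ) • Q := by ext i j; exact (hu i j).symm
  have hBQ : B.map c = Qᵀ * A.map c * Q := by ext i j; exact (hb i j).symm
  have hAU : A * U = U * B := by
    apply hc
    simp only [Matrix.map_mul, hUQ, hBQ]
    rw [smul_mul_assoc, mul_smul_comm, ← mul_assoc, ← mul_assoc, mul_eq_one_comm.1 hQ, one_mul]
  have hUU : Uᵀ * U = (l : ℤ) ^ 2 • (1 : Matrix (Fin n) (Fin n) ℤ) := by
    apply hc
    simp only [Matrix.map_mul, Matrix.transpose_map, hUQ]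
    rw [Matrix.transpose_smul, smul_mul_assoc, mul_smul_comm, hQ]
    ext i j
    rw [Matrix.map_apply, Matrix.smul_apply (_ ^ 2)]
    simp [Matrix.one_apply, sq]
  obtain ⟨i, j, hij⟩ : ∃ i j, ¬ (p : ℤ) ∣ U i j := by
    -- otherwise `l / p` would be a smaller multiplier
    by_contra! hdvd
    have hq0 : 0 < q := Nat.pos_of_mul_pos_left (hq ▸ hlpos)
    refine hlmin q ?_ ⟨hq0, fun i j => ?_⟩
    · rw [hq]; exact lt_mul_left hq0 hp.one_lt
    · obtain ⟨w, hw⟩ := hdvd i j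
      refine ⟨w, mul_left_cancel₀ hp0 ?_⟩
      have h1 := hu i j
      change _ = ((U i j : ℤ) : ℚ) at h1
      rw [hw, Matrix.smul_apply, hlq] at h1
      push_cast at h1
      rw [Matrix.smul_apply, smul_eq_mul, ← mul_assoc]
      exact h1
  have hdvd := sq_dvd_det_aeval_derivative hA hAU hp
    (Int.natCast_dvd_natCast.2 ⟨q, hq⟩) hUU hij
  have hunit := hsf p (by
    rw [matrixDisc, norm_mk_charpoly, ← sq]
    exact hdvd.mul_left _)
  exact (Nat.prime_iff_prime_int.1 hp).not_isUnit hunit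
end

section
/- Let G be a controllable simple graph on n vertices with adjacency matrix A(G), and let H be a simple graph on n vertices with adjacency matrix A(H). Then G and H have the same generalized spectrum (i.e., cospectral adjacency matrices and cospectral complements) if and only if there exists an n×n rational orthogonal matrix Q such that Q^T A(G) Q = A(H) and Qe = e, where e is the all-ones vector. -/
/-!
Write `e` for the all-ones vector and `J = e eᵀ`.  If `Q` is orthogonal with `Q e = e`, then also
`Qᵀ e = e`, so `Qᵀ J Q = J` and conjugation by `Q` carries `A(G)` to `A(H)` and
`A(Gᶜ) = J - 1 - A(G)` to `A(Hᶜ)`; this gives one direction.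

For the other direction, a substitution in the characteristic polynomial of the complement shows
that `A - J` and `B - J` are cospectral, where `A = A(G)` and `B = A(H)`.  In the ring of formal
power series, the matrix determinant lemma gives
`det (1 - t (A - J)) = det (1 - t A) * (1 + t * ∑ₖ (eᵀ Aᵏ e) tᵏ)`
(`charpolyRev_sub_ones`), so `G` and `H` have the same walk counts: `eᵀ Aᵏ e = eᵀ Bᵏ e` for all `k`
(`walkCount_eq`).  The entries of `W_Gᵀ W_G` and of `W_Gᵀ A W_G` are the walk counts of length
`i + j` and `i + j + 1`, hence
`W_Gᵀ W_G = W_Hᵀ W_H` and `W_Gᵀ A W_G = W_Hᵀ B W_H`.  The first identity shows that `W_H` is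
nonsingular together with `W_G`; the matrix `Q = W_G W_H⁻¹` is then orthogonal and conjugates
`A` to `B`, and it fixes `e`, the first column of both walk matrices.
-/

open Polynomial Matrix

/-- The resolvent `(1 - t A)⁻¹ = ∑ₖ Aᵏ tᵏ`, as a matrix of formal power series. -/
noncomputable def resolventSeries {R : Type*} [CommRing R] {n : ℕ} (A : Matrix (Fin n) (Fin n) R) :
    Matrix (Fin n) (Fin n) (PowerSeries R) :=
  Matrix.of fun i j => PowerSeries.mk fun k => (A ^ k) i j

lemma one_sub_mul_resolventSeries {R : Type*} [CommRing R] {n : ℕ} (A : Matrix (Fin n) (Fin n) R) :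
    (1 - (PowerSeries.X : PowerSeries R) • A.map (PowerSeries.C : R →+* _)) *
      resolventSeries A = 1 := by
  ext i j k
  rw [sub_mul, one_mul, smul_mul_assoc, Matrix.sub_apply, Matrix.smul_apply, map_sub, smul_eq_mul]
  cases k with
  | zero => by_cases h : i = j <;> simp [resolventSeries, Matrix.one_apply, h]
  | succ k =>
    rw [PowerSeries.coeff_succ_X_mul, Matrix.mul_apply, map_sum]
    simp [resolventSeries, Matrix.one_apply, apply_ite, pow_succ', Matrix.mul_apply,
      PowerSeries.coeff_one, PowerSeries.coeff_C_mul]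

lemma coe_charpolyRev {R : Type*} [CommRing R] {n : ℕ} (A : Matrix (Fin n) (Fin n) R) :
    (A.charpolyRev : PowerSeries R) =
      (1 - (PowerSeries.X : PowerSeries R) • A.map (PowerSeries.C : R →+* _)).det := by
  rw [Matrix.charpolyRev, ← Polynomial.coeToPowerSeries.ringHom_apply, RingHom.map_det]
  congr 1
  ext1 i j
  by_cases h : i = j <;> simp [h, (PowerSeries.commute_X (PowerSeries.C _)).eq]

/-- The matrix determinant lemma for the rank-one perturbation `A - J`: dividing by
`det (1 - t A)` leaves `1 + t F(t)`, with `F` the generating function of the walk counts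
`eᵀ Aᵏ e`. -/
lemma charpolyRev_sub_ones {R : Type*} [CommRing R] {n : ℕ} (A : Matrix (Fin n) (Fin n) R) :
    ((A - Matrix.of 1).charpolyRev : PowerSeries R) =
      (A.charpolyRev : PowerSeries R) *
        (1 + PowerSeries.X * PowerSeries.mk fun k => ∑ i, ∑ j, (A ^ k) i j) := by
  rw [coe_charpolyRev, coe_charpolyRev]
  set N := 1 - (PowerSeries.X : PowerSeries R) • A.map (PowerSeries.C : R →+* _) with hN
  have h1 : 1 - (PowerSeries.X : PowerSeries R) •
      (A - Matrix.of 1).map (PowerSeries.C : R →+* _) =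
      N * (1 + Matrix.replicateCol Unit (resolventSeries A *ᵥ fun _ => PowerSeries.X) *
        Matrix.replicateRow Unit (fun _ => (1 : PowerSeries R))) := by
    have h2 : N * Matrix.replicateCol Unit (resolventSeries A *ᵥ fun _ => PowerSeries.X) =
        Matrix.replicateCol Unit (fun _ => PowerSeries.X) := by
      rw [Matrix.replicateCol_mulVec, ← Matrix.mul_assoc, one_sub_mul_resolventSeries,
        Matrix.one_mul]
    rw [mul_add, mul_one, ← Matrix.mul_assoc, h2, hN]
    ext1 i j
    simp [Matrix.mul_apply]
    ring
  rw [h1, Matrix.det_mul, Matrix.det_one_add_replicateCol_mul_replicateRow]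
  congr 2
  ext k
  cases k with
  | zero => simp [dotProduct, Matrix.mulVec, map_sum]
  | succ k =>
    simp [dotProduct, Matrix.mulVec, map_sum, PowerSeries.coeff_succ_X_mul,
      PowerSeries.coeff_succ_mul_X, resolventSeries]

lemma walkCount_eq {R : Type*} [CommRing R] [IsDomain R] {n : ℕ} {A B : Matrix (Fin n) (Fin n) R} (h : A.charpoly = B.charpoly)
    (hJ : (A - Matrix.of 1).charpoly = (B - Matrix.of 1).charpoly) (k : ℕ) :
    ∑ i, ∑ j, (A ^ k) i j = ∑ i, ∑ j, (B ^ k) i j := by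
  have h1 := charpolyRev_sub_ones A
  rw [← Matrix.reverse_charpoly, hJ, Matrix.reverse_charpoly, charpolyRev_sub_ones B,
    ← Matrix.reverse_charpoly A, h, Matrix.reverse_charpoly] at h1
  have h0 : (B.charpolyRev : PowerSeries R) ≠ 0 := by
    intro h0
    have := Matrix.eval_charpolyRev (M := B)
    rw [Polynomial.coe_eq_zero_iff.mp h0] at this
    simp at this
  have h2 := mul_left_cancel₀ PowerSeries.X_ne_zero (add_left_cancel (mul_left_cancel₀ h0 h1))
  simpa using (congrArg (PowerSeries.coeff k) h2).symm

lemma charpoly_neg_eq {R : Type*} [CommRing R] {n : ℕ} (M : Matrix (Fin n) (Fin n) R) :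
    (-M).charpoly = (-1) ^ n * M.charpoly.comp (-X) := by
  have h : (-M).charmatrix = -(M.charmatrix.map (Polynomial.compRingHom (-X))) := by
    ext1 i j
    by_cases h : i = j <;> simp [h]
    ring
  rw [Matrix.charpoly, h, Matrix.det_neg, Fintype.card_fin, Matrix.charpoly,
    ← Polynomial.coe_compRingHom_apply, RingHom.map_det]
  rfl

lemma compl_adjMatrix_eq {R : Type*} [Ring R] {n : ℕ} (G : SimpleGraph (Fin n))
    [DecidableRel G.Adj] : Gᶜ.adjMatrix R = Matrix.of 1 - 1 - G.adjMatrix R := by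
  ext i j
  by_cases h : i = j <;> by_cases h' : G.Adj i j <;> simp_all

/-- `A - J = -(J - 1 - A) - 1`, so cospectral complements have cospectral `A - J`. -/
lemma charpoly_sub_ones {n : ℕ} (G : SimpleGraph (Fin n)) [DecidableRel G.Adj] :
    (G.adjMatrix ℤ - Matrix.of 1).charpoly =
      ((-1) ^ n * (Gᶜ.adjMatrix ℤ).charpoly.comp (-X)).comp (X + C 1) := by
  rw [← charpoly_neg_eq, ← Matrix.charpoly_sub_scalar, compl_adjMatrix_eq]
  congr 1
  simp only [map_one]
  abel

/-- The walk matrix of a rational matrix `A`, with columns `e, A e, …, Aⁿ⁻¹ e`. -/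
def ratWalk {n : ℕ} (A : Matrix (Fin n) (Fin n) ℚ) : Matrix (Fin n) (Fin n) ℚ :=
  Matrix.of fun i j => ((A ^ (j : ℕ)) *ᵥ 1) i

/-- `(W_Aᵀ Aᵐ W_A) i j = eᵀ A^(i+m+j) e` for symmetric `A`. -/
lemma ratWalk_gram {n : ℕ} {A : Matrix (Fin n) (Fin n) ℚ} (hA : Aᵀ = A) (m : ℕ) (i j : Fin n) :
    ((ratWalk A)ᵀ * A ^ m * ratWalk A) i j = ∑ a, ∑ b, (A ^ (i + m + j : ℕ)) a b := by
  have h : ((ratWalk A)ᵀ * A ^ m * ratWalk A) i j =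
      ((A ^ (i : ℕ)) *ᵥ 1) ⬝ᵥ (A ^ m *ᵥ ((A ^ (j : ℕ)) *ᵥ 1)) := by
    rw [Matrix.mul_assoc, Matrix.mul_apply]
    rfl
  rw [h, ← Matrix.vecMul_transpose, Matrix.transpose_pow, hA, ← Matrix.dotProduct_mulVec,
    Matrix.mulVec_mulVec, Matrix.mulVec_mulVec, ← pow_add, ← pow_add]
  simp [dotProduct, Matrix.mulVec]

lemma map_adjMatrix {n : ℕ} (G : SimpleGraph (Fin n)) [DecidableRel G.Adj] :
    (G.adjMatrix ℤ).map (Int.castRingHom ℚ) = G.adjMatrix ℚ := by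
  ext i j
  simp [SimpleGraph.adjMatrix_apply, apply_ite]

lemma map_walkMatrix {n : ℕ} (G : SimpleGraph (Fin n)) [DecidableRel G.Adj] :
    (walkMatrix G).map (Int.castRingHom ℚ) = ratWalk (G.adjMatrix ℚ) := by
  ext i j
  rw [← map_adjMatrix, ratWalk, Matrix.of_apply, ← Matrix.map_pow]
  simp [walkMatrix, Matrix.mulVec, dotProduct]

lemma sum_pow_adjMatrix {n : ℕ} (G : SimpleGraph (Fin n)) [DecidableRel G.Adj] (k : ℕ) :
    ∑ i, ∑ j, (G.adjMatrix ℚ ^ k) i j = ((∑ i, ∑ j, (G.adjMatrix ℤ ^ k) i j : ℤ) : ℚ) := by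
  rw [← map_adjMatrix, ← Matrix.map_pow]
  simp

/-- Symmetric matrices with equal walk counts, one of them controllable, are conjugate under
`Q = W_A W_B⁻¹`, which is orthogonal and fixes `e`. -/
lemma exists_orth_of_walkCount {n : ℕ} {A B : Matrix (Fin n) (Fin n) ℚ} (hA : Aᵀ = A)
    (hB : Bᵀ = B) (hW : (ratWalk A).det ≠ 0)
    (h : ∀ k, ∑ i, ∑ j, (A ^ k) i j = ∑ i, ∑ j, (B ^ k) i j) :
    ∃ Q : Matrix (Fin n) (Fin n) ℚ, Qᵀ * Q = 1 ∧ Qᵀ * A * Q = B ∧ Q *ᵥ 1 = 1 := by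
  have gram : ∀ m, (ratWalk A)ᵀ * A ^ m * ratWalk A = (ratWalk B)ᵀ * B ^ m * ratWalk B := by
    intro m
    ext i j
    rw [ratWalk_gram hA, ratWalk_gram hB, h]
  have g0 := gram 0
  have g1 := gram 1
  simp only [pow_zero, pow_one, mul_one] at g0 g1
  have hWB : IsUnit (ratWalk B).det := by
    rw [isUnit_iff_ne_zero]
    intro h0
    have := congrArg Matrix.det g0
    simp [h0, hW] at this
  set U := ratWalk A
  set V := ratWalk B
  have hV : V * V⁻¹ = 1 := Matrix.mul_nonsing_inv _ hWB
  have hV' : V⁻¹ᵀ * Vᵀ = 1 := by rw [← Matrix.transpose_mul, hV, Matrix.transpose_one]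
  refine ⟨U * V⁻¹, ?_, ?_, ?_⟩
  · calc (U * V⁻¹)ᵀ * (U * V⁻¹) = V⁻¹ᵀ * (Uᵀ * U) * V⁻¹ := by
          simp only [Matrix.transpose_mul, Matrix.mul_assoc]
      _ = (V⁻¹ᵀ * Vᵀ) * (V * V⁻¹) := by rw [g0]; simp only [Matrix.mul_assoc]
      _ = 1 := by rw [hV, hV', mul_one]
  · calc (U * V⁻¹)ᵀ * A * (U * V⁻¹) = V⁻¹ᵀ * (Uᵀ * A * U) * V⁻¹ := by
          simp only [Matrix.transpose_mul, Matrix.mul_assoc]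
      _ = (V⁻¹ᵀ * Vᵀ) * B * (V * V⁻¹) := by rw [g1]; simp only [Matrix.mul_assoc]
      _ = B := by rw [hV, hV', mul_one, one_mul]
  · rcases n with _ | n
    · exact Subsingleton.elim _ _
    -- `e` is column `0` of every walk matrix, so `V⁻¹ e` is the first basis vector.
    · have col (M : Matrix (Fin (n + 1)) (Fin (n + 1)) ℚ) :
          ratWalk M *ᵥ Pi.single 0 1 = 1 := by
        ext i
        simp [ratWalk]
      calc (U * V⁻¹) *ᵥ 1 = (U * V⁻¹) *ᵥ (V *ᵥ Pi.single 0 1) := by rw [col B]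
        _ = 1 := by
          rw [Matrix.mulVec_mulVec, Matrix.mul_assoc, Matrix.nonsing_inv_mul _ hWB,
            Matrix.mul_one, col A]

lemma charpoly_conj_orth {n : ℕ} {Q M : Matrix (Fin n) (Fin n) ℚ} (hQ : Qᵀ * Q = 1) :
    (Qᵀ * M * Q).charpoly = M.charpoly := by
  rw [Matrix.charpoly_mul_comm, ← Matrix.mul_assoc, mul_eq_one_comm.mp hQ, one_mul]

/-- Integer characteristic polynomials may be compared over `ℚ`. -/
lemma charpoly_eq_of_rat {n : ℕ} {G H : SimpleGraph (Fin n)}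
    [DecidableRel G.Adj] [DecidableRel H.Adj]
    (h : (G.adjMatrix ℚ).charpoly = (H.adjMatrix ℚ).charpoly) :
    (G.adjMatrix ℤ).charpoly = (H.adjMatrix ℤ).charpoly := by
  rw [← map_adjMatrix, ← map_adjMatrix, Matrix.charpoly_map, Matrix.charpoly_map] at h
  exact Polynomial.map_injective _ Int.cast_injective h

lemma conj_ones {n : ℕ} {Q : Matrix (Fin n) (Fin n) ℚ} (hQ : Qᵀ * Q = 1) (he : Q *ᵥ 1 = 1) :
    Qᵀ * Matrix.of 1 * Q = Matrix.of 1 := by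
  have he' : Qᵀ *ᵥ 1 = 1 := by
    conv_lhs => rw [← he]
    rw [Matrix.mulVec_mulVec, hQ, Matrix.one_mulVec]
  have hJ : (Matrix.of 1 : Matrix (Fin n) (Fin n) ℚ) = Matrix.vecMulVec 1 1 := by
    ext i j
    simp [Matrix.vecMulVec_apply]
  rw [hJ, Matrix.mul_vecMulVec, Matrix.vecMulVec_mul, he', ← Matrix.mulVec_transpose, he']

/-- **Theorem 1.3 (Wang–Xu).** Let `G` be a controllable graph on `n` vertices and `H`
any graph on `n` vertices.  Then `G` and `H` have the same generalized spectrum if and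
only if there is a rational orthogonal matrix `Q` with `Qᵀ A(G) Q = A(H)` and `Qe = e`. -/
theorem genCospectral_iff_exists_ratOrth {n : ℕ} (G H : SimpleGraph (Fin n))
    [DecidableRel G.Adj] [DecidableRel H.Adj]
    (hctrl : (walkMatrix G).det ≠ 0) :
    GenCospectral G H ↔
      ∃ Q : Matrix (Fin n) (Fin n) ℚ, Qᵀ * Q = 1 ∧
        Qᵀ * G.adjMatrix ℚ * Q = H.adjMatrix ℚ ∧ (Q *ᵥ fun _ => 1) = (fun _ => 1) := by
  constructor
  · rintro ⟨h, hc⟩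
    refine exists_orth_of_walkCount (G.transpose_adjMatrix) (H.transpose_adjMatrix) ?_ ?_
    · rw [← map_walkMatrix, ← RingHom.mapMatrix_apply, ← RingHom.map_det]
      simpa using hctrl
    · intro k
      rw [sum_pow_adjMatrix, sum_pow_adjMatrix,
        walkCount_eq h (by rw [charpoly_sub_ones, charpoly_sub_ones, hc])]
  · rintro ⟨Q, hQ, hGH, he⟩
    refine ⟨charpoly_eq_of_rat ?_, charpoly_eq_of_rat ?_⟩
    · rw [← hGH, charpoly_conj_orth hQ]
    · have hc : Qᵀ * Gᶜ.adjMatrix ℚ * Q = Hᶜ.adjMatrix ℚ := by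
        rw [compl_adjMatrix_eq, compl_adjMatrix_eq, mul_sub, mul_sub, sub_mul, sub_mul, hGH,
          conj_ones hQ he, mul_one, hQ]
      rw [← hc, charpoly_conj_orth hQ]
end

section
/- Let G be a controllable simple graph on n vertices with adjacency matrix A and walk matrix W. If det(W)/2^⌊n/2⌋ (which is always an integer) is odd and square-free, then every matrix in Q_G is a permutation matrix, and hence G is determined by its generalized spectrum. -/
/-!
Let `Q ∈ 𝒬_G` and `B = QᵀAQ`. Since `Qᵀe = e`, the matrix `Q` satisfies `Qᵀ W(A) = W(B)`; hence
`det W(A) • Q` is integral, and it suffices to show that every prime `p` can be cancelled: if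
`U = p m Q` is integral then `p` divides `U`. An integral orthogonal matrix fixing `e` is a
permutation matrix.

*The prime 2.* Modulo `2` the matrix `A` is skew-symmetric, so its characteristic polynomial `φ`
has the parity of `n`, and there is a monic integral `η` of degree `⌈n/2⌉` with `η² ≡ φ` or
`η² ≡ xφ`. The symmetric matrix `S = η(A)` satisfies `S² ≡ 0`, whose diagonal gives `Se ≡ 0`. Thus
a unimodular column operation, depending only on `η`, makes `⌊n/2⌋` columns of `W(A)` even; halving
them gives `Y(A)` with `det W(A) = 2^⌊n/2⌋ det Y(A)`. The same operation works for `B`, so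
`Uᵀ Y(A) = 2 m Y(B)`, and `det Y(A)` is odd (`exists_half_walkMat`, `cancel_prime`).

*Odd primes.* Here `p² ∤ det W(A) = ± det W(B)`, so the kernels of both walk matrices modulo `p`
and of their transposes are at most lines. If `U ≢ 0`, its columns and rows span the left kernels,
and `AU = UB` shows that `A` and `B` have there the same eigenvalue `λ`. As `A W = W C` with `C`
the companion matrix of `φ`, the right kernels are eigenlines of `C` for this same `λ`
(`kernel_eigen`), and `C` is nonderogatory, so they coincide. With `W(A) f = p y` this forces
`Uᵀ y ≡ 0`, which is incompatible with `p² ∤ det W(A)` (`dvd_of_sq_not_dvd`).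

*Generalized spectrum.* If `H` has the generalized spectrum of `G`, the matrix determinant lemma
applied to `J - I - A` shows that `eᵀ adj(xI - A) e` is the same for both graphs, and Euclidean
division by `φ` recovers all the numbers `eᵀAᵏe` from it. So `W(G)` and `W(H)` have the same Gram
matrix, and `(W(H) W(G)⁻¹)ᵀ` is an element of `𝒬_G` conjugating one adjacency matrix into the other
(`exists_orthogonal`). Being a permutation matrix, it is an isomorphism.
-/

open Polynomial Matrix

/-! ### Walk matrices and companion matrices -/

/-- The walk matrix `[e, Ae, …, A^{n-1}e]` of an arbitrary square integer matrix. -/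
def walkMat {n : ℕ} (A : Matrix (Fin n) (Fin n) ℤ) : Matrix (Fin n) (Fin n) ℤ :=
  Matrix.of fun i j => ((A ^ (j : ℕ)) *ᵥ (1 : Fin n → ℤ)) i

/-- The matrix whose `j`-th column is the coefficient vector of the polynomial `q j`, truncated
to degrees `< n`. -/
def polyMat {n : ℕ} (q : Fin n → ℤ[X]) : Matrix (Fin n) (Fin n) ℤ :=
  Matrix.of fun i j => (q j).coeff i

lemma walkMat_mul_polyMat {n : ℕ} (A : Matrix (Fin n) (Fin n) ℤ) (q : Fin n → ℤ[X])
    (hq : ∀ j, (q j).natDegree < n) :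
    walkMat A * polyMat q = Matrix.of fun i j => (aeval A (q j) *ᵥ (1 : Fin n → ℤ)) i := by
  ext i j
  rw [of_apply, aeval_eq_sum_range' (hq j), Matrix.sum_mulVec, Finset.sum_apply,
    ← Fin.sum_univ_eq_sum_range (fun k => (((q j).coeff k • A ^ k) *ᵥ (1 : Fin n → ℤ)) i),
    Matrix.mul_apply]
  refine Finset.sum_congr rfl fun k _ => ?_
  rw [Matrix.smul_mulVec, Pi.smul_apply, smul_eq_mul, mul_comm]
  rfl

/-- The polynomials reducing `x · x^j` modulo a monic polynomial `φ` of degree `n`. -/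
noncomputable def companionPoly (n : ℕ) (φ : ℤ[X]) (j : Fin n) : ℤ[X] :=
  if (j : ℕ) + 1 < n then X ^ ((j : ℕ) + 1) else X ^ n - φ

/-- The companion matrix of a monic polynomial of degree `n`: it represents multiplication by `x`
on `ℤ[x]/(φ)` in the basis `1, x, …, x^{n-1}`. -/
noncomputable def companionMat (n : ℕ) (φ : ℤ[X]) : Matrix (Fin n) (Fin n) ℤ :=
  polyMat (companionPoly n φ)

lemma natDegree_companionPoly {n : ℕ} {φ : ℤ[X]} (hφ : φ.Monic) (hd : φ.natDegree = n)
    (j : Fin n) : (companionPoly n φ j).natDegree < n := by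
  unfold companionPoly
  split_ifs with h
  · simpa using h
  · have hn : 0 < n := j.pos
    have hdeg : (X ^ n - φ).degree < (X ^ n : ℤ[X]).degree := by
      apply degree_sub_lt_left
      · rw [degree_X_pow, degree_eq_natDegree hφ.ne_zero, hd]
      · exact (monic_X_pow n).ne_zero
      · rw [hφ.leadingCoeff, (monic_X_pow n).leadingCoeff]
    rw [degree_X_pow] at hdeg
    by_cases h0 : (X ^ n - φ) = 0
    · simpa [h0] using hn
    · exact (natDegree_lt_iff_degree_lt h0).2 hdeg

/-- In the basis of the columns of the walk matrix, `A` acts as the companion matrix of its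
characteristic polynomial (Cayley–Hamilton). -/
lemma mul_walkMat {n : ℕ} (A : Matrix (Fin n) (Fin n) ℤ) :
    A * walkMat A = walkMat A * companionMat n A.charpoly := by
  rw [companionMat, walkMat_mul_polyMat]
  · ext i j
    have h1 : (A * walkMat A) i j = ((A ^ ((j : ℕ) + 1)) *ᵥ (1 : Fin n → ℤ)) i := by
      rw [pow_succ', ← Matrix.mulVec_mulVec]
      rfl
    rw [h1, of_apply, companionPoly]
    split_ifs with h
    · simp
    · have : (j : ℕ) + 1 = n := by omega
      simp [this, Matrix.aeval_self_charpoly]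
  · exact natDegree_companionPoly A.charpoly_monic (by simp)

/-- An eigenvector of a companion matrix modulo `p` vanishes as soon as its last coordinate does;
hence the eigenspaces are at most one-dimensional. -/
lemma companionMat_eigen {n : ℕ} (φ : ℤ[X]) (p lam : ℤ) (h : Fin n → ℤ)
    (heig : ∀ i, p ∣ (companionMat n φ *ᵥ h) i - lam * h i)
    (hlast : ∀ j : Fin n, (j : ℕ) + 1 = n → p ∣ h j) : ∀ j, p ∣ h j := by
  suffices H : ∀ k : ℕ, ∀ j : Fin n, n - (j : ℕ) ≤ k → p ∣ h j from fun j => H _ j le_rfl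
  intro k
  induction k with
  | zero => intro j hj; omega
  | succ k ih =>
    intro j hj
    by_cases hj1 : (j : ℕ) + 1 = n
    · exact hlast j hj1
    · set i : Fin n := ⟨(j : ℕ) + 1, by omega⟩ with hi
      have hi' : p ∣ h i := ih i (by simp [hi]; omega)
      have h1 : p ∣ (companionMat n φ *ᵥ h) i := by
        have := (heig i).add (hi'.mul_left lam)
        simpa using this
      rw [Matrix.mulVec, dotProduct, ← Finset.add_sum_erase _ _ (Finset.mem_univ j)] at h1
      have h2 : p ∣ ∑ x ∈ Finset.univ.erase j, companionMat n φ i x * h x := by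
        refine Finset.dvd_sum fun x hx => ?_
        have hxj : x ≠ j := Finset.ne_of_mem_erase hx
        by_cases hx1 : (x : ℕ) + 1 = n
        · exact (hlast x hx1).mul_left _
        · have : companionMat n φ i x = 0 := by
            have hlt : (x : ℕ) + 1 < n := by omega
            simp only [companionMat, polyMat, of_apply, companionPoly, if_pos hlt, coeff_X_pow]
            rw [if_neg]
            intro hc
            apply hxj
            ext
            simp [hi] at hc
            omega
          simp [this]
      have h3 := (dvd_add_left h2).1 h1
      have h4 : companionMat n φ i j = 1 := by
        have hlt : (j : ℕ) + 1 < n := by omega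
        simp [companionMat, polyMat, companionPoly, if_pos hlt, coeff_X_pow, hi]
      simpa [h4] using h3

/-! ### Kernels modulo a prime -/

/-- A matrix that is nonsingular modulo the prime `p` kills no nonzero vector modulo `p`. -/
lemma dvd_of_dvd_mulVec {n : ℕ} {p : ℤ} (hp : Prime p) (M : Matrix (Fin n) (Fin n) ℤ)
    (hM : ¬ p ∣ M.det) (x : Fin n → ℤ) (hx : ∀ i, p ∣ (M *ᵥ x) i) : ∀ i, p ∣ x i := by
  intro i
  have h1 : (M.adjugate *ᵥ (M *ᵥ x)) i = M.det * x i := by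
    rw [Matrix.mulVec_mulVec, Matrix.adjugate_mul, Matrix.smul_mulVec, Matrix.one_mulVec]
    simp
  have h2 : p ∣ (M.adjugate *ᵥ (M *ᵥ x)) i := by
    rw [Matrix.mulVec, dotProduct]
    exact Finset.dvd_sum fun j _ => (hx j).mul_left _
  rw [h1] at h2
  exact (hp.dvd_or_dvd h2).resolve_left hM

/-- The Cramer formula for `M u = p y`. -/
lemma det_mul_apply_eq {n : ℕ} {p : ℤ} (M : Matrix (Fin n) (Fin n) ℤ)
    (u y : Fin n → ℤ) (h : M *ᵥ u = p • y) (i : Fin n) :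
    M.det * u i = p * (M.updateCol i y).det := by
  rw [← Matrix.cramer_apply, Matrix.cramer_eq_adjugate_mulVec]
  have h1 : (M.adjugate *ᵥ (M *ᵥ u)) i = M.det * u i := by
    rw [Matrix.mulVec_mulVec, Matrix.adjugate_mul, Matrix.smul_mulVec, Matrix.one_mulVec]
    simp
  rw [← h1, h, Matrix.mulVec_smul]
  simp

lemma exists_smul_of_dvd {n : ℕ} {p : ℤ} {x : Fin n → ℤ} (h : ∀ i, p ∣ x i) :
    ∃ y : Fin n → ℤ, x = p • y := by
  choose y hy using h
  exact ⟨y, funext fun i => by simp [hy i]⟩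

/-- If `p² ∤ det M`, then the kernel of `M` modulo `p` is at most one-dimensional: replacing a
suitable column of `M` by `(1/p) M u` makes it nonsingular modulo `p`. -/
lemma ker_one_dim {n : ℕ} {p : ℤ} (hp : Prime p) (M : Matrix (Fin n) (Fin n) ℤ)
    (hM : ¬ p ^ 2 ∣ M.det) (u x : Fin n → ℤ) (hu : ∀ i, p ∣ (M *ᵥ u) i)
    (hx : ∀ i, p ∣ (M *ᵥ x) i) (i : Fin n) (hui : ¬ p ∣ u i) (k : Fin n) :
    p ∣ u i * x k - x i * u k := by
  obtain ⟨y, hy⟩ := exists_smul_of_dvd hu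
  have h1 := det_mul_apply_eq M u y hy i
  have h2 : ¬ p ∣ (M.updateCol i y).det := by
    intro hd
    apply hM
    have : p ^ 2 ∣ M.det * u i := by
      rw [h1, pow_two]; exact mul_dvd_mul_left _ hd
    exact hp.pow_dvd_of_dvd_mul_right 2 hui this
  set z : Fin n → ℤ := u i • x - x i • u with hz
  have hzi : z i = 0 := by simp [hz, mul_comm]
  -- the `i`-th coordinate of `z` is zero, so replacing the `i`-th column does not affect `M z`
  have h3 : (M.updateCol i y) *ᵥ z = M *ᵥ z := by
    ext r
    simp only [Matrix.mulVec, dotProduct]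
    refine Finset.sum_congr rfl fun s _ => ?_
    by_cases hs : s = i
    · simp [hs, hzi]
    · simp [Matrix.updateCol_ne hs]
  have h4 := dvd_of_dvd_mulVec hp _ h2 z (by
    intro r
    rw [h3, hz, Matrix.mulVec_sub, Matrix.mulVec_smul, Matrix.mulVec_smul]
    simpa using ((hx r).mul_left (u i)).sub ((hu r).mul_left (x i))) k
  simpa [hz] using h4

/-- Let `AW = WC` and `p² ∤ det W`. If `u ≢ 0` is a left kernel vector of `W` modulo `p` that is a
left eigenvector of `A` for `lam`, and `Wf = p y` with `f ≢ 0`, then `u ⬝ y ≢ 0` and `f` is an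
eigenvector of `C` for the same `lam`. The first claim holds because `u` annihilates modulo `p` the
matrix `W` with a column replaced by `y`, which is nonsingular modulo `p`; the second follows by
evaluating `u ⬝ A y` in two ways. -/
lemma kernel_eigen {n : ℕ} {p : ℤ} (hp : Prime p) (A W C : Matrix (Fin n) (Fin n) ℤ)
    (hAW : A * W = W * C) (hM : ¬ p ^ 2 ∣ W.det)
    (u : Fin n → ℤ) (hu : ∀ i, p ∣ (u ᵥ* W) i) (lam : ℤ)
    (hlam : ∀ i, p ∣ (u ᵥ* A) i - lam * u i) (i₀ : Fin n) (hu0 : ¬ p ∣ u i₀)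
    (f y : Fin n → ℤ) (i : Fin n) (hfi : ¬ p ∣ f i) (hf : W *ᵥ f = p • y) :
    ¬ p ∣ u ⬝ᵥ y ∧ ∀ k, p ∣ (C *ᵥ f) k - lam * f k := by
  have huy : ¬ p ∣ u ⬝ᵥ y := by
    intro hd
    have h1 := det_mul_apply_eq W f y hf i
    have h2 : p ∣ (W.updateCol i y).det := by
      by_contra hcon
      rw [← Matrix.det_transpose] at hcon
      refine hu0 (dvd_of_dvd_mulVec hp _ hcon u (fun r => ?_) i₀)
      rw [Matrix.mulVec_transpose]
      by_cases hr : r = i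
      · subst hr
        simpa [Matrix.vecMul] using hd
      · have := hu r
        simpa [Matrix.vecMul, dotProduct, Matrix.updateCol_ne hr] using this
    apply hM
    have : p ^ 2 ∣ W.det * f i := by
      rw [h1, pow_two]; exact mul_dvd_mul_left _ h2
    exact hp.pow_dvd_of_dvd_mul_right 2 hfi this
  refine ⟨huy, ?_⟩
  have hWf : ∀ k, p ∣ (W *ᵥ f) k := fun k => by simp [hf]
  have hWCf : W *ᵥ (C *ᵥ f) = p • (A *ᵥ y) := by
    rw [Matrix.mulVec_mulVec, ← hAW, ← Matrix.mulVec_mulVec, hf, Matrix.mulVec_smul]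
  have hker := ker_one_dim hp W hM f (C *ᵥ f) hWf (fun k => by simp [hWCf]) i hfi
  set c := (C *ᵥ f) i with hc
  -- `f i • C f = c • f + p • g`
  obtain ⟨g, hg⟩ := exists_smul_of_dvd (x := f i • (C *ᵥ f) - c • f) (fun k => by
    simpa using hker k)
  have h5 : f i • (A *ᵥ y) - c • y = W *ᵥ g := by
    have h6 : p • (f i • (A *ᵥ y) - c • y) = p • (W *ᵥ g) := by
      rw [← Matrix.mulVec_smul W p g, ← hg, Matrix.mulVec_sub, Matrix.mulVec_smul,
        Matrix.mulVec_smul, hWCf, hf, smul_sub, smul_comm p, smul_comm p c]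
    exact smul_right_injective _ hp.ne_zero h6
  have h7 : p ∣ f i * (u ⬝ᵥ (A *ᵥ y)) - c * (u ⬝ᵥ y) := by
    have : u ⬝ᵥ (W *ᵥ g) = f i * (u ⬝ᵥ (A *ᵥ y)) - c * (u ⬝ᵥ y) := by
      rw [← h5, dotProduct_sub, dotProduct_smul, dotProduct_smul]; simp
    rw [← this, Matrix.dotProduct_mulVec, dotProduct]
    exact Finset.dvd_sum fun k _ => (hu k).mul_right _
  have h8 : p ∣ u ⬝ᵥ (A *ᵥ y) - lam * (u ⬝ᵥ y) := by
    have : u ⬝ᵥ (A *ᵥ y) - lam * (u ⬝ᵥ y) = (u ᵥ* A - lam • u) ⬝ᵥ y := by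
      rw [Matrix.dotProduct_mulVec, sub_dotProduct, smul_dotProduct]; simp
    rw [this, dotProduct]
    exact Finset.dvd_sum fun k _ => Dvd.dvd.mul_right (by simpa using hlam k) _
  have h9 : p ∣ lam * f i - c := by
    have h10 : p ∣ (lam * f i - c) * (u ⬝ᵥ y) := by
      have h12 := (h8.mul_left (f i)).neg_right.add h7
      rwa [show -(f i * (u ⬝ᵥ (A *ᵥ y) - lam * (u ⬝ᵥ y))) + (f i * (u ⬝ᵥ (A *ᵥ y)) - c * (u ⬝ᵥ y))
        = (lam * f i - c) * (u ⬝ᵥ y) by ring] at h12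
    exact (hp.dvd_or_dvd h10).resolve_right huy
  intro k
  have h11 : p ∣ f i * ((C *ᵥ f) k - lam * f k) := by
    have h12 := (hker k).sub (h9.mul_right (f k))
    rwa [show f i * (C *ᵥ f) k - c * f k - (lam * f i - c) * f k
      = f i * ((C *ᵥ f) k - lam * f k) by ring] at h12
  exact (hp.dvd_or_dvd h11).resolve_left hfi

lemma exists_ker_mod {n : ℕ} (p : ℕ) [Fact p.Prime] (M : Matrix (Fin n) (Fin n) ℤ)
    (h : (p : ℤ) ∣ M.det) :
    ∃ (f y : Fin n → ℤ) (i : Fin n), ¬ (p : ℤ) ∣ f i ∧ M *ᵥ f = (p : ℤ) • y := by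
  have h1 : (M.map (Int.castRingHom (ZMod p))).det = 0 := by
    rw [← RingHom.mapMatrix_apply, ← RingHom.map_det, eq_intCast]
    exact (ZMod.intCast_zmod_eq_zero_iff_dvd _ p).2 h
  obtain ⟨v, hv0, hv⟩ := Matrix.exists_mulVec_eq_zero_iff.2 h1
  obtain ⟨f, rfl⟩ : ∃ f : Fin n → ℤ, (fun i => (f i : ZMod p)) = v := by
    choose f hf using fun i => ZMod.intCast_surjective (v i)
    exact ⟨f, funext hf⟩
  obtain ⟨i, hi⟩ := Function.ne_iff.1 hv0
  have h2 : ∀ k, (p : ℤ) ∣ (M *ᵥ f) k := by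
    intro k
    rw [← ZMod.intCast_zmod_eq_zero_iff_dvd _ p]
    have := congrFun hv k
    simpa [Matrix.mulVec, dotProduct] using this
  obtain ⟨y, hy⟩ := exists_smul_of_dvd h2
  refine ⟨f, y, i, fun hd => hi ?_, hy⟩
  simpa using (ZMod.intCast_zmod_eq_zero_iff_dvd _ p).2 hd

/-- If `U` intertwines `A` and `B` and carries the walk matrices to `p m` times each other, then
`U ≡ 0` modulo `p` as soon as `p²` does not divide `det W(A)`. Otherwise a column `u` and a row of
`U` span the left kernels of `W(A)` and `W(B)` modulo `p`, with a common eigenvalue. The right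
kernels are then eigenlines of one companion matrix for this eigenvalue, so they coincide; writing
`W(A) f = p y`, this gives `Uᵀ y = m W(B) f ≡ 0`, contradicting `u ⬝ y ≢ 0`. -/
lemma dvd_of_sq_not_dvd {n : ℕ} (p : ℕ) [Fact p.Prime] (m : ℤ) (A B U : Matrix (Fin n) (Fin n) ℤ)
    (hA : Aᵀ = A) (hchar : A.charpoly = B.charpoly) (hAU : A * U = U * B)
    (hUW : Uᵀ * walkMat A = ((p : ℤ) * m) • walkMat B)
    (hUW' : U * walkMat B = ((p : ℤ) * m) • walkMat A)
    (hdet : (walkMat B).det = (walkMat A).det ∨ (walkMat B).det = -(walkMat A).det)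
    (hsq : ¬ (p : ℤ) ^ 2 ∣ (walkMat A).det) (i j : Fin n) : (p : ℤ) ∣ U i j := by
  have hp : Prime (p : ℤ) := Nat.prime_iff_prime_int.1 Fact.out
  have hsq' : ¬ (p : ℤ) ^ 2 ∣ (walkMat B).det := by
    rcases hdet with h | h <;> simpa [h] using hsq
  -- columns of `U` lie in the kernel of `W(A)ᵀ`, rows in the kernel of `W(B)ᵀ`
  have hcol : ∀ s r, (p : ℤ) ∣ ((fun k => U k s) ᵥ* walkMat A) r := by
    intro s r
    have := congrFun (congrFun hUW s) r
    simp only [Matrix.mul_apply, Matrix.transpose_apply, Matrix.smul_apply, smul_eq_mul] at this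
    rw [Matrix.vecMul, dotProduct, this, mul_assoc]
    exact dvd_mul_right _ _
  have hrow : ∀ s r, (p : ℤ) ∣ ((fun k => U s k) ᵥ* walkMat B) r := by
    intro s r
    have := congrFun (congrFun hUW' s) r
    simp only [Matrix.mul_apply, Matrix.smul_apply, smul_eq_mul] at this
    rw [Matrix.vecMul, dotProduct, this, mul_assoc]
    exact dvd_mul_right _ _
  by_cases hpd : (p : ℤ) ∣ (walkMat A).det
  swap
  · rw [← Matrix.det_transpose] at hpd
    exact dvd_of_dvd_mulVec hp _ hpd (fun k => U k j)
      (fun r => by rw [Matrix.mulVec_transpose]; exact hcol j r) i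
  have hpd' : (p : ℤ) ∣ (walkMat B).det := by
    rcases hdet with h | h <;> simpa [h] using hpd
  by_contra hij
  obtain ⟨f, y, a, hfa, hf⟩ := exists_ker_mod p _ hpd
  obtain ⟨f', y', a', hfa', hf'⟩ := exists_ker_mod p _ hpd'
  -- an inverse of `U i j` modulo `p`, used to write the common eigenvalue as an integer
  obtain ⟨s, t, hst⟩ : ∃ s t : ℤ, s * U i j + t * p = 1 := by
    have : IsCoprime (U i j) (p : ℤ) := ((hp.coprime_iff_not_dvd).2 hij).symm
    exact this
  set lam := s * (A * U) i j with hlam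
  have hUA : ∀ r, ((fun k => U k j) ᵥ* A) r = (A * U) r j := by
    intro r
    rw [← Matrix.mulVec_transpose, hA]; rfl
  have hUB : ∀ r, ((fun k => U i k) ᵥ* B) r = (A * U) i r := by
    intro r
    rw [hAU]; rfl
  -- `A` maps the kernel line to itself with eigenvalue `lam`
  have h1 : ∀ r, (p : ℤ) ∣ ((fun k => U k j) ᵥ* A) r - lam * U r j := by
    intro r
    have hk := ker_one_dim hp (walkMat A)ᵀ (by rwa [Matrix.det_transpose]) (fun k => U k j)
      (fun k => (A * U) k j) (fun r => by rw [Matrix.mulVec_transpose]; exact hcol j r)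
      (fun r => by
        rw [Matrix.mulVec_transpose]
        have : (fun k => (A * U) k j) ᵥ* walkMat A
            = ((fun k => U k j) ᵥ* walkMat A) ᵥ* companionMat n A.charpoly := by
          rw [Matrix.vecMul_vecMul, ← mul_walkMat, ← Matrix.vecMul_vecMul]
          congr 1
          exact (funext hUA).symm
        rw [this, Matrix.vecMul, dotProduct]
        exact Finset.dvd_sum fun k _ => (hcol j k).mul_right _) i hij r
    rw [hUA]
    have h2 : (A * U) r j - lam * U r j
        = s * (U i j * (A * U) r j - (A * U) i j * U r j) + p * (t * (A * U) r j) := by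
      rw [hlam]; linear_combination (-(A * U) r j) * hst
    rw [h2]
    exact (hk.mul_left s).add (dvd_mul_right _ _)
  have h1' : ∀ r, (p : ℤ) ∣ ((fun k => U i k) ᵥ* B) r - lam * U i r := by
    intro r
    have hk := ker_one_dim hp (walkMat B)ᵀ (by rwa [Matrix.det_transpose]) (fun k => U i k)
      (fun k => (A * U) i k) (fun r => by rw [Matrix.mulVec_transpose]; exact hrow i r)
      (fun r => by
        rw [Matrix.mulVec_transpose]
        have : (fun k => (A * U) i k) ᵥ* walkMat B
            = ((fun k => U i k) ᵥ* walkMat B) ᵥ* companionMat n B.charpoly := by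
          rw [Matrix.vecMul_vecMul, ← mul_walkMat, ← Matrix.vecMul_vecMul]
          congr 1
          exact (funext hUB).symm
        rw [this, Matrix.vecMul, dotProduct]
        exact Finset.dvd_sum fun k _ => (hrow i k).mul_right _) j hij r
    rw [hUB]
    have h2 : (A * U) i r - lam * U i r
        = s * (U i j * (A * U) i r - (A * U) i j * U i r) + p * (t * (A * U) i r) := by
      rw [hlam]; linear_combination (-(A * U) i r) * hst
    rw [h2]
    exact (hk.mul_left s).add (dvd_mul_right _ _)
  obtain ⟨huy, hCf⟩ := kernel_eigen hp A _ _ (mul_walkMat A) hsq (fun k => U k j) (hcol j) lam h1 i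
    hij f y a hfa hf
  obtain ⟨-, hCf'⟩ := kernel_eigen hp B _ _ (mul_walkMat B) hsq' (fun k => U i k) (hrow i) lam h1' j
    hij f' y' a' hfa' hf'
  rw [← hchar] at hCf'
  -- eigenvectors of the companion matrix with the same eigenvalue are proportional
  have hn : 0 < n := i.pos
  set last : Fin n := ⟨n - 1, by omega⟩ with hlast
  have huniq : ∀ k : Fin n, (k : ℕ) + 1 = n → k = last := by
    intro k hk; ext; simp [hlast]; omega
  have hfl : ¬ (p : ℤ) ∣ f' last := fun hd => hfa' (companionMat_eigen _ _ lam f' hCf'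
    (fun k hk => by rw [huniq k hk]; exact hd) a')
  have hprop := companionMat_eigen A.charpoly (p : ℤ) lam (f' last • f - f last • f') (by
      intro k
      rw [Matrix.mulVec_sub, Matrix.mulVec_smul, Matrix.mulVec_smul]
      have h12 := ((hCf k).mul_left (f' last)).sub ((hCf' k).mul_left (f last))
      simp only [Pi.sub_apply, Pi.smul_apply, smul_eq_mul]
      rwa [show ∀ a b c d : ℤ, f' last * (a - lam * b) - f last * (c - lam * d)
        = f' last * a - f last * c - lam * (f' last * b - f last * d) by intros; ring] at h12)
    (fun k hk => by rw [huniq k hk]; simp [mul_comm])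
  -- so the kernel vector `f` of `W(A)` is also a kernel vector of `W(B)`
  have hBf : (p : ℤ) ∣ (walkMat B *ᵥ f) j := by
    have h3 : (p : ℤ) ∣ (walkMat B *ᵥ (f' last • f - f last • f')) j := by
      rw [Matrix.mulVec, dotProduct]
      exact Finset.dvd_sum fun k _ => (hprop k).mul_left _
    rw [Matrix.mulVec_sub, Matrix.mulVec_smul, Matrix.mulVec_smul, hf'] at h3
    simp only [Pi.sub_apply, Pi.smul_apply, smul_eq_mul] at h3
    rw [dvd_sub_left (Dvd.intro _ (by ring :
      (p : ℤ) * (f last * y' j) = f last * (p * y' j)))] at h3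
    exact (hp.dvd_or_dvd h3).resolve_left hfl
  apply huy
  have h4 : (p : ℤ) • (Uᵀ *ᵥ y) = (p : ℤ) • (m • (walkMat B *ᵥ f)) := by
    rw [← Matrix.mulVec_smul, ← hf, Matrix.mulVec_mulVec, hUW, Matrix.smul_mulVec, mul_smul]
  have h5 := congrFun (smul_right_injective _ hp.ne_zero h4) j
  have h6 : (fun k => U k j) ⬝ᵥ y = (Uᵀ *ᵥ y) j := rfl
  rw [h6, h5]
  exact hBf.mul_left m

/-! ### The prime two -/

/-- The characteristic polynomial of a skew-symmetric matrix has the parity of `n`. -/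
lemma coeff_charpoly_neg_transpose {n : ℕ} (K : Matrix (Fin n) (Fin n) ℤ) (hK : Kᵀ = -K) (k : ℕ) :
    K.charpoly.coeff k = (-1) ^ (n + k) * K.charpoly.coeff k := by
  have h1 : K.charpoly.comp (C (-1) * X) = (-1) ^ n * K.charpoly := by
    have h2 : (compRingHom (C (-1 : ℤ) * X)).mapMatrix K.charmatrix = -(-K).charmatrix := by
      ext1 i j
      by_cases hij : i = j
      · subst hij
        simp [Matrix.charmatrix_apply_eq]
        ring
      · simp [Matrix.charmatrix_apply_ne _ _ _ hij]
    have h3 : K.charpoly.comp (C (-1) * X) = compRingHom (C (-1 : ℤ) * X) K.charmatrix.det := rfl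
    rw [h3, RingHom.map_det, h2, Matrix.det_neg, Fintype.card_fin, ← hK]
    congr 1
    exact Matrix.charpoly_transpose K
  have h4 := congrArg (fun q => q.coeff k) h1
  simp only [comp_C_mul_X_coeff] at h4
  rw [show ((-1 : ℤ[X]) ^ n) = C ((-1) ^ n) by simp, coeff_C_mul] at h4
  have h5 : ((-1 : ℤ) ^ k) * (-1) ^ k = 1 := by rw [← mul_pow]; simp
  linear_combination (-1) ^ k * h4 - K.charpoly.coeff k * h5

/-- Modulo `2` a symmetric matrix with zero diagonal is skew-symmetric, so its characteristic
polynomial only involves powers `x^k` with `k ≡ n (mod 2)`. -/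
lemma charpoly_coeff_even {n : ℕ} (A : Matrix (Fin n) (Fin n) ℤ) (hA : Aᵀ = A)
    (hdiag : ∀ i, A i i = 0) (k : ℕ) (hk : Odd (n + k)) :
    (Int.castRingHom (ZMod 2)) (A.charpoly.coeff k) = 0 := by
  set K : Matrix (Fin n) (Fin n) ℤ :=
    Matrix.of fun i j => if i < j then A i j else -A i j with hKdef
  have hsymm : ∀ i j, A j i = A i j := fun i j => congrFun (congrFun hA i) j
  have hK : Kᵀ = -K := by
    ext i j
    simp only [hKdef, Matrix.transpose_apply, of_apply, Matrix.neg_apply, hsymm i j]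
    rcases lt_trichotomy i j with h | h | h
    · simp [h, h.not_gt]
    · subst h; simp [hdiag]
    · simp [h, h.not_gt]
  have h1 := coeff_charpoly_neg_transpose K hK k
  rw [hk.neg_one_pow] at h1
  have h2 : K.charpoly.coeff k = 0 := by linarith
  have h3 : A.map (Int.castRingHom (ZMod 2)) = K.map (Int.castRingHom (ZMod 2)) := by
    ext i j
    simp only [hKdef, Matrix.map_apply, of_apply]
    split_ifs
    · rfl
    · rw [map_neg, ZMod.neg_eq_self_mod_two]
  rw [← coeff_map, ← Matrix.charpoly_map, h3, Matrix.charpoly_map, coeff_map, h2, map_zero]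

/-- A monic `η` of degree `⌈n/2⌉` with `η² ≡ φ_A` (`n` even) or `η² ≡ x φ_A` (`n` odd)
modulo `2`. -/
lemma exists_sqrt_charpoly {n : ℕ} (A : Matrix (Fin n) (Fin n) ℤ) (hA : Aᵀ = A)
    (hdiag : ∀ i, A i i = 0) :
    ∃ η g : ℤ[X], η.Monic ∧ η.natDegree = (n + 1) / 2 ∧
      η ^ 2 = X ^ (n % 2) * A.charpoly + C 2 * g := by
  have : Fact (Nat.Prime 2) := ⟨Nat.prime_two⟩
  set ψ : (ZMod 2)[X] := (X ^ (n % 2) * A.charpoly).map (Int.castRingHom (ZMod 2)) with hψ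
  have hmon : (X ^ (n % 2) * A.charpoly).Monic := (monic_X_pow _).mul A.charpoly_monic
  have hψmon : ψ.Monic := hmon.map _
  have hψdeg : ψ.natDegree = n % 2 + n := by
    rw [hψ, hmon.natDegree_map, (monic_X_pow _).natDegree_mul A.charpoly_monic]
    simp
  have hder : derivative ψ = 0 := by
    ext k
    rw [coeff_derivative, coeff_zero]
    rcases Nat.even_or_odd k with hk | hk
    · have : ψ.coeff (k + 1) = 0 := by
        rw [hψ, coeff_map, coeff_X_pow_mul']
        split_ifs with h
        · apply charpoly_coeff_even A hA hdiag
          rw [Nat.odd_iff]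
          have := Nat.even_iff.1 hk
          omega
        · simp
      rw [this, zero_mul]
    · have : ((k : ZMod 2) + 1) = 0 := by
        have h2 : ((k + 1 : ℕ) : ZMod 2) = 0 := by
          rw [ZMod.natCast_eq_zero_iff]
          exact (hk.add_one).two_dvd
        exact_mod_cast h2
      rw [this, mul_zero]
  have hexp : expand (ZMod 2) 2 (contract 2 ψ) = ψ := expand_contract 2 hder two_ne_zero
  have hcmon : (contract 2 ψ).Monic := by
    rw [← monic_expand_iff (p := 2) two_pos, hexp]; exact hψmon
  have hcdeg : (contract 2 ψ).natDegree * 2 = n % 2 + n := by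
    rw [← natDegree_expand, hexp, hψdeg]
  obtain ⟨η, hη, hηd, hηm⟩ := lifts_and_natDegree_eq_and_monic (f := Int.castRingHom (ZMod 2))
    (p := contract 2 ψ) (by
      rw [lifts_iff_coeff_lifts]
      exact fun k => ZMod.intCast_surjective (n := 2) _) hcmon
  have hsq : (η ^ 2 - X ^ (n % 2) * A.charpoly).map (Int.castRingHom (ZMod 2)) = 0 := by
    rw [Polynomial.map_sub, Polynomial.map_pow, hη, ← ZMod.expand_card, hexp, ← hψ, sub_self]
  have hdvd : C (2 : ℤ) ∣ η ^ 2 - X ^ (n % 2) * A.charpoly := by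
    rw [C_dvd_iff_dvd_coeff]
    intro k
    have := congrArg (fun q => q.coeff k) hsq
    simp only [coeff_map, coeff_zero, eq_intCast] at this
    exact_mod_cast (ZMod.intCast_zmod_eq_zero_iff_dvd _ 2).1 this
  obtain ⟨g, hg⟩ := hdvd
  refine ⟨η, g, hηm, by omega, ?_⟩
  rw [← hg]; ring

/-- If `S` is a symmetric integer matrix with `S² ≡ 0 (mod 2)`, then `Se ≡ 0 (mod 2)`: the
diagonal of `S²` is congruent to the vector of row sums of `S`. -/
lemma two_dvd_rowSum {n : ℕ} (S T : Matrix (Fin n) (Fin n) ℤ) (hS : Sᵀ = S)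
    (h2 : S ^ 2 = (2 : ℤ) • T) (i : Fin n) : 2 ∣ (S *ᵥ (1 : Fin n → ℤ)) i := by
  have h1 : ∑ j, S i j ^ 2 = 2 * T i i := by
    have := congrFun (congrFun h2 i) i
    rw [pow_two, Matrix.mul_apply, Matrix.smul_apply, smul_eq_mul] at this
    rw [← this]
    refine Finset.sum_congr rfl fun j _ => ?_
    have hs : S j i = S i j := congrFun (congrFun hS i) j
    rw [hs, pow_two]
  have h3 : (2 : ℤ) ∣ ∑ j, (S i j ^ 2 - S i j) := by
    refine Finset.dvd_sum fun j _ => ?_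
    have : S i j ^ 2 - S i j = S i j * (S i j - 1) := by ring
    rw [this]
    exact (Int.even_mul_pred_self _).two_dvd
  rw [Finset.sum_sub_distrib, h1] at h3
  have h4 : (S *ᵥ (1 : Fin n → ℤ)) i = ∑ j, S i j := by simp [Matrix.mulVec, dotProduct]
  rw [h4]
  exact (dvd_sub_right (dvd_mul_right _ _)).1 h3

lemma aeval_transpose {n : ℕ} (A : Matrix (Fin n) (Fin n) ℤ) (hA : Aᵀ = A) (q : ℤ[X]) :
    (aeval A q)ᵀ = aeval A q := by
  rw [aeval_eq_sum_range, Matrix.transpose_sum]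
  simp only [Matrix.transpose_smul, Matrix.transpose_pow, hA]

/-- The polynomials `1, x, …, x^{k-1}, η, xη, …` with `k = ⌈n/2⌉`. -/
noncomputable def halfPoly (n : ℕ) (η : ℤ[X]) (j : Fin n) : ℤ[X] :=
  if (j : ℕ) < (n + 1) / 2 then X ^ (j : ℕ) else X ^ ((j : ℕ) - (n + 1) / 2) * η

/-- The diagonal matrix with `⌈n/2⌉` ones followed by `⌊n/2⌋` twos. -/
def halfDiag (n : ℕ) : Matrix (Fin n) (Fin n) ℤ :=
  Matrix.diagonal fun j => if (j : ℕ) < (n + 1) / 2 then 1 else 2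

lemma det_halfDiag (n : ℕ) : (halfDiag n).det = 2 ^ (n / 2) := by
  rw [halfDiag, Matrix.det_diagonal,
    Fin.prod_univ_eq_prod_range (fun j => if j < (n + 1) / 2 then (1 : ℤ) else 2) n,
    Finset.prod_ite, Finset.prod_const_one, one_mul, Finset.prod_const]
  congr 1
  have : (Finset.range n).filter (fun j => ¬ j < (n + 1) / 2) = Finset.Ico ((n + 1) / 2) n := by
    ext j; simp; omega
  rw [this, Nat.card_Ico]; omega

lemma halfPoly_natDegree {n : ℕ} {η : ℤ[X]} (hm : η.Monic) (hd : η.natDegree = (n + 1) / 2)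
    (j : Fin n) : (halfPoly n η j).natDegree = j := by
  unfold halfPoly
  split_ifs with h
  · simp
  · rw [(monic_X_pow _).natDegree_mul hm, natDegree_X_pow, hd]; omega

lemma halfPoly_monic {n : ℕ} {η : ℤ[X]} (hm : η.Monic) (j : Fin n) : (halfPoly n η j).Monic := by
  unfold halfPoly
  split_ifs with h
  · exact monic_X_pow _
  · exact (monic_X_pow _).mul hm

lemma det_polyMat_halfPoly {n : ℕ} {η : ℤ[X]} (hm : η.Monic) (hd : η.natDegree = (n + 1) / 2) :
    (polyMat (halfPoly n η)).det = 1 :=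
  Matrix.det_matrixOfPolynomials _ (halfPoly_natDegree hm hd) (halfPoly_monic hm)

/-- The columns `η(A)e, Aη(A)e, …` are even, which extracts the factor `2^⌊n/2⌋` from the walk
matrix. -/
lemma exists_half_walkMat {n : ℕ} (A : Matrix (Fin n) (Fin n) ℤ) (hA : Aᵀ = A) {η g : ℤ[X]}
    (hm : η.Monic) (hd : η.natDegree = (n + 1) / 2)
    (hsq : η ^ 2 = X ^ (n % 2) * A.charpoly + C 2 * g) :
    ∃ Y : Matrix (Fin n) (Fin n) ℤ, walkMat A * polyMat (halfPoly n η) = Y * halfDiag n := by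
  have hS : ∀ i, 2 ∣ (aeval A η *ᵥ (1 : Fin n → ℤ)) i := by
    refine two_dvd_rowSum _ (aeval A g) (aeval_transpose A hA η) ?_
    rw [← map_pow, hsq, map_add, map_mul, Matrix.aeval_self_charpoly, mul_zero, zero_add,
      map_mul, aeval_C, Algebra.smul_def]
  rw [walkMat_mul_polyMat A _ fun j => by rw [halfPoly_natDegree hm hd]; exact j.2]
  have hdvd : ∀ i j : Fin n, (if (j : ℕ) < (n + 1) / 2 then (1 : ℤ) else 2) ∣
      (aeval A (halfPoly n η j) *ᵥ (1 : Fin n → ℤ)) i := by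
    intro i j
    unfold halfPoly
    split_ifs with h
    · exact one_dvd _
    · rw [map_mul, ← Matrix.mulVec_mulVec, Matrix.mulVec, dotProduct]
      exact Finset.dvd_sum fun r _ => (hS r).mul_left _
  choose Y hY using hdvd
  refine ⟨Matrix.of Y, ?_⟩
  ext i j
  rw [halfDiag, Matrix.mul_diagonal, of_apply, of_apply, hY i j, mul_comm]

/-! ### Integrality of orthogonal matrices between walk matrices -/

lemma halfDiag_cancel {n : ℕ} {M N : Matrix (Fin n) (Fin n) ℤ}
    (h : M * halfDiag n = N * halfDiag n) : M = N := by
  ext i j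
  have h1 := congrFun (congrFun h i) j
  rw [halfDiag, Matrix.mul_diagonal, Matrix.mul_diagonal] at h1
  refine mul_right_cancel₀ ?_ h1
  split_ifs <;> norm_num

/-- The entrywise inclusion of integer matrices into rational matrices. -/
abbrev toRat {n : ℕ} (M : Matrix (Fin n) (Fin n) ℤ) : Matrix (Fin n) (Fin n) ℚ :=
  (Int.castRingHom ℚ).mapMatrix M

lemma toRat_injective {n : ℕ} : Function.Injective (toRat (n := n)) :=
  Matrix.map_injective Int.cast_injective

lemma toRat_smul {n : ℕ} (c : ℤ) (M : Matrix (Fin n) (Fin n) ℤ) :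
    toRat (c • M) = (c : ℚ) • toRat M := by
  ext i j
  simp only [RingHom.mapMatrix_apply, Matrix.map_apply, Matrix.smul_apply, smul_eq_mul, eq_intCast,
    Int.cast_mul]

lemma toRat_mul {n : ℕ} (M N : Matrix (Fin n) (Fin n) ℤ) :
    toRat (M * N) = toRat M * toRat N := map_mul _ _ _

lemma toRat_one {n : ℕ} : toRat (1 : Matrix (Fin n) (Fin n) ℤ) = 1 := map_one _

lemma toRat_transpose {n : ℕ} (M : Matrix (Fin n) (Fin n) ℤ) : toRat Mᵀ = (toRat M)ᵀ := rfl

lemma toRat_walkMat_apply {n : ℕ} (A : Matrix (Fin n) (Fin n) ℤ) (i j : Fin n) :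
    toRat (walkMat A) i j = (toRat A ^ (j : ℕ) *ᵥ (1 : Fin n → ℚ)) i := by
  rw [toRat, ← map_pow]
  simp [walkMat, Matrix.mulVec, dotProduct]

/-- A rational orthogonal `Q` with `Qe = e` and `QᵀAQ = B` sends walk matrix to walk matrix. -/
lemma transpose_mul_walkMat {n : ℕ} {A B : Matrix (Fin n) (Fin n) ℤ}
    {Q : Matrix (Fin n) (Fin n) ℚ} (hQ : Qᵀ * Q = 1) (hQe : Q *ᵥ (1 : Fin n → ℚ) = 1)
    (hQAB : Qᵀ * toRat A * Q = toRat B) : Qᵀ * toRat (walkMat A) = toRat (walkMat B) := by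
  have hQ' : Q * Qᵀ = 1 := mul_eq_one_comm.1 hQ
  have h1 : Qᵀ * toRat A = toRat B * Qᵀ := by
    rw [← hQAB, Matrix.mul_assoc (Qᵀ * toRat A), hQ', Matrix.mul_one]
  have h2 : ∀ k : ℕ, Qᵀ * toRat A ^ k = toRat B ^ k * Qᵀ := by
    intro k
    induction k with
    | zero => simp
    | succ k ih => rw [pow_succ, ← Matrix.mul_assoc, ih, Matrix.mul_assoc, h1, pow_succ,
        Matrix.mul_assoc]
  have h3 : Qᵀ *ᵥ (1 : Fin n → ℚ) = 1 := by
    conv_lhs => rw [← hQe]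
    rw [Matrix.mulVec_mulVec, hQ, Matrix.one_mulVec]
  ext i j
  have h4 : (Qᵀ * toRat (walkMat A)) i j = (Qᵀ *ᵥ (toRat A ^ (j : ℕ) *ᵥ (1 : Fin n → ℚ))) i := by
    rw [Matrix.mul_apply, Matrix.mulVec, dotProduct]
    simp only [toRat_walkMat_apply]
  rw [h4, Matrix.mulVec_mulVec, h2, ← Matrix.mulVec_mulVec, h3, toRat_walkMat_apply]

lemma charpoly_eq_of_orthogonal {n : ℕ} {A B : Matrix (Fin n) (Fin n) ℤ}
    {Q : Matrix (Fin n) (Fin n) ℚ} (hQ : Qᵀ * Q = 1)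
    (hQAB : Qᵀ * toRat A * Q = toRat B) : A.charpoly = B.charpoly := by
  have hQ' : Q * Qᵀ = 1 := mul_eq_one_comm.1 hQ
  apply Polynomial.map_injective (Int.castRingHom ℚ) Int.cast_injective
  rw [← Matrix.charpoly_map, ← Matrix.charpoly_map]
  change (toRat A).charpoly = (toRat B).charpoly
  rw [← hQAB, Matrix.charpoly_mul_comm, ← Matrix.mul_assoc, hQ', Matrix.one_mul]

/-- Under the arithmetic condition on the walk matrix, every prime can be cancelled from a
denominator of `Q`. The prime `2` uses the matrix `Y` with `det Y = det W / 2^⌊n/2⌋` in place of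
`W`; it is built from the same polynomial `η` for `A` and `B`, so `Qᵀ Y = Y'` persists. -/
lemma cancel_prime {n : ℕ} {A B : Matrix (Fin n) (Fin n) ℤ} (hA : Aᵀ = A) (hB : Bᵀ = B)
    (hdiag : ∀ i, A i i = 0)
    (hodd : Odd ((walkMat A).det / 2 ^ (n / 2)))
    (hsf : Squarefree ((walkMat A).det / 2 ^ (n / 2)))
    {Q : Matrix (Fin n) (Fin n) ℚ} (hQ : Qᵀ * Q = 1) (hQe : Q *ᵥ (1 : Fin n → ℚ) = 1)
    (hQAB : Qᵀ * toRat A * Q = toRat B) (p : ℕ) [hpf : Fact p.Prime] (m : ℤ)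
    (U : Matrix (Fin n) (Fin n) ℤ) (hU : ((p : ℚ) * m) • Q = toRat U) :
    ∃ U' : Matrix (Fin n) (Fin n) ℤ, (m : ℚ) • Q = toRat U' := by
  have hp : Prime (p : ℤ) := Nat.prime_iff_prime_int.1 Fact.out
  have hQ' : Q * Qᵀ = 1 := mul_eq_one_comm.1 hQ
  have hchar := charpoly_eq_of_orthogonal hQ hQAB
  have hW := transpose_mul_walkMat hQ hQe hQAB
  have hW' : Q * toRat (walkMat B) = toRat (walkMat A) := by
    rw [← hW, ← Matrix.mul_assoc, hQ', Matrix.one_mul]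
  have hAU : A * U = U * B := by
    apply toRat_injective
    rw [toRat_mul, toRat_mul, ← hU, ← hQAB, Matrix.mul_smul, Matrix.smul_mul,
      ← Matrix.mul_assoc, ← Matrix.mul_assoc, hQ', Matrix.one_mul]
  have hUW : Uᵀ * walkMat A = ((p : ℤ) * m) • walkMat B := by
    apply toRat_injective
    rw [toRat_smul, toRat_mul, toRat_transpose, ← hU, Matrix.transpose_smul, Matrix.smul_mul, hW]
    push_cast; rfl
  have hUW' : U * walkMat B = ((p : ℤ) * m) • walkMat A := by
    apply toRat_injective
    rw [toRat_smul, toRat_mul, ← hU, Matrix.smul_mul, hW']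
    push_cast; rfl
  obtain ⟨η, g, hm, hd, hsq⟩ := exists_sqrt_charpoly A hA hdiag
  obtain ⟨Y, hY⟩ := exists_half_walkMat A hA hm hd hsq
  obtain ⟨Y', hY'⟩ := exists_half_walkMat B hB hm hd (hchar ▸ hsq)
  have hdetW : (walkMat A).det = Y.det * 2 ^ (n / 2) := by
    have := congrArg Matrix.det hY
    rwa [Matrix.det_mul, Matrix.det_mul, det_polyMat_halfPoly hm hd, det_halfDiag, mul_one] at this
  rw [hdetW, Int.mul_ediv_cancel _ (by positivity)] at hodd hsf
  have hdvd : ∀ i j, (p : ℤ) ∣ U i j := by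
    rcases (Fact.out : p.Prime).eq_two_or_odd' with rfl | hpodd
    · intro i j
      have hUY : Uᵀ * Y = (((2 : ℕ) : ℤ) * m) • Y' := by
        apply halfDiag_cancel
        rw [Matrix.mul_assoc, ← hY, ← Matrix.mul_assoc, hUW, Matrix.smul_mul, Matrix.smul_mul, hY']
      refine dvd_of_dvd_mulVec hp Yᵀ ?_ (fun k => U k j) (fun r => ?_) i
      · rw [Matrix.det_transpose]
        push_cast
        rwa [← even_iff_two_dvd, Int.not_even_iff_odd]
      · rw [Matrix.mulVec_transpose]
        change _ ∣ (Uᵀ * Y) j r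
        rw [hUY, Matrix.smul_apply, smul_eq_mul, mul_assoc]
        exact dvd_mul_right _ _
    · refine dvd_of_sq_not_dvd p m A B U hA hchar hAU hUW hUW' ?_ ?_
      · have hdQ : Q.det = 1 ∨ Q.det = -1 := by
          have := congrArg Matrix.det hQ
          rw [Matrix.det_mul, Matrix.det_transpose, Matrix.det_one] at this
          exact mul_self_eq_one_iff.1 this
        have h1 := congrArg Matrix.det hW
        rw [Matrix.det_mul, Matrix.det_transpose, toRat, ← RingHom.map_det, ← RingHom.map_det,
          eq_intCast, eq_intCast] at h1
        rcases hdQ with h | h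
        · left
          rw [h, one_mul] at h1
          exact_mod_cast h1.symm
        · right
          rw [h, neg_one_mul] at h1
          exact_mod_cast h1.symm
      · rw [hdetW]
        intro hd2
        have h2 : ¬ (p : ℤ) ∣ 2 ^ (n / 2) := by
          intro h3
          have h4 : p ∣ 2 := by exact_mod_cast hp.dvd_of_dvd_pow h3
          have h5 := (Nat.prime_dvd_prime_iff_eq Fact.out Nat.prime_two).1 h4
          subst h5
          exact absurd hpodd (by decide)
        have h3 := hp.pow_dvd_of_dvd_mul_right 2 h2 hd2
        rw [pow_two] at h3
        exact hp.not_isUnit (hsf _ h3)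
  choose U' hU' using hdvd
  refine ⟨Matrix.of U', ?_⟩
  ext i j
  have h1 := congrFun (congrFun hU i) j
  have hp0 : (p : ℚ) ≠ 0 := by exact_mod_cast (Fact.out : p.Prime).ne_zero
  simp only [Matrix.smul_apply, smul_eq_mul, RingHom.mapMatrix_apply, Matrix.map_apply, hU' i j,
    eq_intCast] at h1
  push_cast at h1
  simp only [Matrix.smul_apply, smul_eq_mul, RingHom.mapMatrix_apply, Matrix.map_apply, of_apply,
    eq_intCast]
  rw [mul_assoc] at h1
  exact mul_left_cancel₀ hp0 h1

lemma integral_of_natSmul {n : ℕ} {A B : Matrix (Fin n) (Fin n) ℤ} (hA : Aᵀ = A) (hB : Bᵀ = B)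
    (hdiag : ∀ i, A i i = 0)
    (hodd : Odd ((walkMat A).det / 2 ^ (n / 2)))
    (hsf : Squarefree ((walkMat A).det / 2 ^ (n / 2)))
    {Q : Matrix (Fin n) (Fin n) ℚ} (hQ : Qᵀ * Q = 1) (hQe : Q *ᵥ (1 : Fin n → ℚ) = 1)
    (hQAB : Qᵀ * toRat A * Q = toRat B) (N : ℕ) (hN : N ≠ 0)
    (hU : ∃ U : Matrix (Fin n) (Fin n) ℤ, (N : ℚ) • Q = toRat U) :
    ∃ U : Matrix (Fin n) (Fin n) ℤ, Q = toRat U := by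
  induction N using Nat.strong_induction_on with
  | _ N ih =>
    by_cases h1 : N = 1
    · subst h1; simpa using hU
    · have hpf : Fact N.minFac.Prime := ⟨Nat.minFac_prime h1⟩
      obtain ⟨m, hm⟩ := Nat.minFac_dvd N
      have hm0 : m ≠ 0 := by rintro rfl; exact hN (by simpa using hm)
      obtain ⟨U, hU⟩ := hU
      have hlt : m < N := by
        have := hpf.out.two_le
        nlinarith [Nat.pos_of_ne_zero hm0]
      refine ih m hlt hm0 ?_
      have := cancel_prime hA hB hdiag hodd hsf hQ hQe hQAB N.minFac (m : ℤ) U (by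
        rw [← hU]; congr 1; conv_rhs => rw [hm]
        push_cast; rfl)
      simpa using this

/-- Under the arithmetic condition on the walk matrix, `Q` is an integer matrix. -/
lemma integral_of_walkMat {n : ℕ} {A B : Matrix (Fin n) (Fin n) ℤ} (hA : Aᵀ = A) (hB : Bᵀ = B)
    (hdiag : ∀ i, A i i = 0) (hctrl : (walkMat A).det ≠ 0)
    (hodd : Odd ((walkMat A).det / 2 ^ (n / 2)))
    (hsf : Squarefree ((walkMat A).det / 2 ^ (n / 2)))
    {Q : Matrix (Fin n) (Fin n) ℚ} (hQ : Qᵀ * Q = 1) (hQe : Q *ᵥ (1 : Fin n → ℚ) = 1)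
    (hQAB : Qᵀ * toRat A * Q = toRat B) : ∃ U : Matrix (Fin n) (Fin n) ℤ, Q = toRat U := by
  have hW := transpose_mul_walkMat hQ hQe hQAB
  set d := (walkMat A).det with hd
  have h1 : (d : ℚ) • Q = toRat (walkMat B * (walkMat A).adjugate)ᵀ := by
    rw [toRat_transpose, toRat_mul, ← hW, Matrix.mul_assoc, ← toRat_mul, Matrix.mul_adjugate, ← hd,
      toRat_smul, toRat_one, Matrix.mul_smul, Matrix.mul_one, Matrix.transpose_smul,
      Matrix.transpose_transpose]
  refine integral_of_natSmul hA hB hdiag hodd hsf hQ hQe hQAB d.natAbs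
    (Int.natAbs_ne_zero.2 hctrl) ?_
  rcases Int.natAbs_eq d with h | h
  · refine ⟨(walkMat B * (walkMat A).adjugate)ᵀ, ?_⟩
    rw [← h1]
    conv_rhs => rw [h]
    simp
  · refine ⟨-(walkMat B * (walkMat A).adjugate)ᵀ, ?_⟩
    rw [toRat, map_neg]
    change _ = -toRat _
    rw [← h1, ← neg_smul]; congr 1
    conv_rhs => rw [h]
    simp

/-- An integral orthogonal matrix with unit row sums is a permutation matrix. -/
lemma isPermMatrix_of_integral {n : ℕ} (U : Matrix (Fin n) (Fin n) ℤ)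
    (hQ : (toRat U)ᵀ * toRat U = 1) (hQe : toRat U *ᵥ (1 : Fin n → ℚ) = 1) :
    IsPermMatrix (toRat U) := by
  have hU : Uᵀ * U = 1 := by
    apply toRat_injective
    rw [toRat_mul, toRat_one]; exact hQ
  have hU' : U * Uᵀ = 1 := mul_eq_one_comm.1 hU
  have hrow : ∀ i, ∑ j, U i j = 1 := by
    intro i
    have := congrFun hQe i
    simp only [Matrix.mulVec, dotProduct, Pi.one_apply, mul_one, RingHom.mapMatrix_apply,
      Matrix.map_apply, eq_intCast] at this
    exact_mod_cast this
  have hrow2 : ∀ i, ∑ j, U i j * U i j = 1 := by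
    intro i
    have := congrFun (congrFun hU' i) i
    simpa [Matrix.mul_apply] using this
  have hcol2 : ∀ j, ∑ i, U i j * U i j = 1 := by
    intro j
    have := congrFun (congrFun hU j) j
    simpa [Matrix.mul_apply] using this
  -- `∑ (u² - u) = 0` over a row, with nonnegative integer terms
  have h01 : ∀ i j, U i j = 0 ∨ U i j = 1 := by
    intro i
    have hs : ∑ j, (U i j * U i j - U i j) = 0 := by
      rw [Finset.sum_sub_distrib, hrow, hrow2, sub_self]
    have hnn : ∀ j ∈ Finset.univ, 0 ≤ U i j * U i j - U i j := by
      intro j _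
      rcases le_or_gt (U i j) 0 with h | h <;> nlinarith
    intro j
    have := (Finset.sum_eq_zero_iff_of_nonneg hnn).1 hs j (Finset.mem_univ j)
    have h2 : U i j * (U i j - 1) = 0 := by linarith
    rcases mul_eq_zero.1 h2 with h | h
    · exact Or.inl h
    · exact Or.inr (by linarith)
  have hex : ∀ j, ∃ i, U i j = 1 := by
    intro j
    by_contra! hcon
    have : ∑ i, U i j * U i j = 0 := Finset.sum_eq_zero fun i _ => by
      rw [(h01 i j).resolve_right (hcon i), zero_mul]
    rw [hcol2] at this
    exact one_ne_zero this
  choose σ hσ using hex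
  have huniq : ∀ i j k, U i j = 1 → U i k = 1 → j = k := by
    intro i j k hj hk
    by_contra hjk
    have h1 : ∑ x ∈ {j, k}, U i x ≤ ∑ x, U i x :=
      Finset.sum_le_sum_of_subset_of_nonneg (Finset.subset_univ _)
        fun x _ _ => by rcases h01 i x with h | h <;> simp [h]
    rw [Finset.sum_pair hjk, hj, hk, hrow] at h1
    norm_num at h1
  have hinj : Function.Injective σ := fun j k hjk =>
    huniq (σ j) j k (hσ j) (by rw [hjk]; exact hσ k)
  refine ⟨Equiv.ofBijective σ (Finite.injective_iff_bijective.1 hinj), fun i j => ?_⟩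
  rw [Equiv.ofBijective_apply]
  split_ifs with h
  · simp [h, hσ]
  · rcases h01 i j with h0 | h0
    · simp [h0]
    · exfalso
      obtain ⟨k, hk⟩ := (Finite.injective_iff_surjective.1 hinj) i
      have := huniq i j k h0 (by rw [← hk]; exact hσ k)
      exact h (by rw [this, hk])

lemma isPermMatrix_of_memQG {n : ℕ} (G : SimpleGraph (Fin n))
    [DecidableRel G.Adj] (hctrl : (walkMatrix G).det ≠ 0)
    (hodd : Odd ((walkMatrix G).det / 2 ^ (n / 2)))
    (hsf : Squarefree ((walkMatrix G).det / 2 ^ (n / 2)))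
    (Q : Matrix (Fin n) (Fin n) ℚ) (h : MemQG G Q) : IsPermMatrix Q := by
  obtain ⟨hQ, hQe, h01⟩ := h
  have hAQ : G.adjMatrix ℚ = toRat (G.adjMatrix ℤ) := by
    ext i j; simp [SimpleGraph.adjMatrix_apply]
  have hB : ∃ B : Matrix (Fin n) (Fin n) ℤ, Qᵀ * toRat (G.adjMatrix ℤ) * Q = toRat B := by
    have : ∀ i j, ∃ z : ℤ, (Qᵀ * G.adjMatrix ℚ * Q) i j = (z : ℚ) := fun i j => by
      rcases h01 i j with h | h
      · exact ⟨0, by simpa using h⟩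
      · exact ⟨1, by simpa using h⟩
    choose B hB using this
    exact ⟨Matrix.of B, by rw [← hAQ]; ext i j; simp [hB]⟩
  obtain ⟨B, hB⟩ := hB
  have hBs : Bᵀ = B := by
    apply toRat_injective
    rw [toRat_transpose, ← hB, ← hAQ, Matrix.transpose_mul, Matrix.transpose_mul,
      Matrix.transpose_transpose, SimpleGraph.transpose_adjMatrix, Matrix.mul_assoc]
  obtain ⟨U, rfl⟩ := integral_of_walkMat (A := G.adjMatrix ℤ) (B := B)
    (SimpleGraph.transpose_adjMatrix G) hBs (fun i => by simp) hctrl hodd hsf hQ hQe hB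
  exact isPermMatrix_of_integral U hQ hQe

/-! ### Walk counts from the generalized spectrum -/

/-- The matrix determinant lemma, for a possibly non-invertible matrix of nonzero determinant. -/
lemma det_add_vecMulVec_eq {R : Type*} [CommRing R] [IsDomain R] {n : ℕ}
    (M : Matrix (Fin n) (Fin n) R) (hM : M.det ≠ 0) (u v : Fin n → R) :
    (M + vecMulVec u v).det = M.det + v ⬝ᵥ (M.adjugate *ᵥ u) := by
  set f := algebraMap R (FractionRing R) with hf
  have hinj : Function.Injective f := IsFractionRing.injective R (FractionRing R)
  apply hinj
  have hdet : (M.map f).det = f M.det := by rw [RingHom.map_det]; rfl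
  have hne : (M.map f).det ≠ 0 := by
    rw [hdet]; exact (map_ne_zero_iff f hinj).2 hM
  have h1 : f (M + vecMulVec u v).det
      = (M.map f + replicateCol Unit (f ∘ u) * replicateRow Unit (f ∘ v)).det := by
    rw [RingHom.map_det, ← vecMulVec_eq]
    congr 1
    ext i j
    simp [vecMulVec_apply]
  have h2 : f (v ⬝ᵥ (M.adjugate *ᵥ u)) = (f ∘ v) ⬝ᵥ ((M.map f).adjugate *ᵥ (f ∘ u)) := by
    have : (M.map f).adjugate = M.adjugate.map f := (RingHom.map_adjugate f M).symm
    rw [this]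
    simp [dotProduct, Matrix.mulVec, map_sum]
  rw [h1, Matrix.det_add_replicateCol_mul_replicateRow (isUnit_iff_ne_zero.2 hne), map_add, h2,
    hdet, Matrix.det_unique (n := Unit), Matrix.add_apply, Matrix.one_apply_eq, mul_add, mul_one,
    Matrix.inv_def, hdet, Matrix.mul_smul, Matrix.smul_mul, Matrix.smul_apply, smul_eq_mul,
    ← mul_assoc, Ring.mul_inverse_cancel _ (isUnit_iff_ne_zero.2 (hdet ▸ hne)), one_mul,
    Matrix.mul_assoc]
  rfl

/-- The vector `adj(xI - A) e` of polynomials. -/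
noncomputable def resolventVec {n : ℕ} (A : Matrix (Fin n) (Fin n) ℤ) : Fin n → ℤ[X] :=
  A.charmatrix.adjugate *ᵥ 1

/-- The identity `(xI - A) adj(xI - A) e = φ_A e`. -/
lemma X_mul_resolventVec {n : ℕ} (A : Matrix (Fin n) (Fin n) ℤ) :
    (X : ℤ[X]) • resolventVec A - (A.map C) *ᵥ resolventVec A
      = A.charpoly • (1 : Fin n → ℤ[X]) := by
  have h1 : A.charmatrix *ᵥ resolventVec A = A.charpoly • (1 : Fin n → ℤ[X]) := by
    rw [resolventVec, Matrix.mulVec_mulVec, Matrix.mul_adjugate, Matrix.smul_mulVec,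
      Matrix.one_mulVec]
    rfl
  rw [← h1, charmatrix, Matrix.sub_mulVec]
  congr 1
  ext i : 1
  simp [Matrix.scalar_apply, Matrix.mulVec_diagonal]

lemma natDegree_resolventVec_lt {n : ℕ} (A : Matrix (Fin n) (Fin n) ℤ) (i : Fin n) :
    (resolventVec A i).natDegree < n := by
  obtain ⟨m, -, hm⟩ := Finset.exists_max_image Finset.univ (fun j => (resolventVec A j).natDegree)
    ⟨i, Finset.mem_univ i⟩
  refine (hm i (Finset.mem_univ i)).trans_lt ?_
  by_cases h0 : resolventVec A m = 0
  · rw [h0, natDegree_zero]; exact i.pos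
  have h1 := congrFun (X_mul_resolventVec A) m
  simp only [Pi.sub_apply, Pi.smul_apply, smul_eq_mul, Pi.one_apply, mul_one] at h1
  have h2 : ((A.map C *ᵥ resolventVec A) m).natDegree ≤ (resolventVec A m).natDegree := by
    rw [Matrix.mulVec, dotProduct]
    refine natDegree_sum_le_of_forall_le _ _ fun j _ => ?_
    exact (natDegree_C_mul_le _ _).trans (hm j (Finset.mem_univ j))
  have h3 : (X * resolventVec A m).natDegree = (resolventVec A m).natDegree + 1 := by
    rw [mul_comm, natDegree_mul_X h0]
  have h4 := congrArg natDegree h1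
  rw [natDegree_sub_eq_left_of_natDegree_lt (by omega), h3, Matrix.charpoly_natDegree_eq_dim,
    Fintype.card_fin] at h4
  omega

/-- If `A` and `B` have the same characteristic polynomial and the same sum of the entries of
`adj(xI - ·)`, then `eᵀAᵏe = eᵀBᵏe` for every `k`. -/
lemma walks_eq {n : ℕ} {A B : Matrix (Fin n) (Fin n) ℤ} (hchar : A.charpoly = B.charpoly)
    (hres : (1 : Fin n → ℤ[X]) ⬝ᵥ resolventVec A = 1 ⬝ᵥ resolventVec B) (k : ℕ) :
    (1 : Fin n → ℤ) ⬝ᵥ (A ^ k *ᵥ 1) = 1 ⬝ᵥ (B ^ k *ᵥ 1) := by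
  -- both sides are determined by Euclidean division of `x · eᵀAᵏ adj(xI - A) e` by `φ`
  have hstep : ∀ (M : Matrix (Fin n) (Fin n) ℤ) (k : ℕ),
      (1 : Fin n → ℤ[X]) ⬝ᵥ ((M ^ (k + 1)).map C *ᵥ resolventVec M)
        = X * (1 ⬝ᵥ ((M ^ k).map C *ᵥ resolventVec M))
          - M.charpoly * C ((1 : Fin n → ℤ) ⬝ᵥ (M ^ k *ᵥ 1)) := by
    intro M k
    have h1 : M.map C *ᵥ resolventVec M
        = (X : ℤ[X]) • resolventVec M - M.charpoly • (1 : Fin n → ℤ[X]) := by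
      rw [← X_mul_resolventVec]; abel
    have h2 : (M ^ (k + 1)).map C = (M ^ k).map C * M.map C := by
      rw [pow_succ, Matrix.map_mul]
    have h3 : (1 : Fin n → ℤ[X]) ⬝ᵥ ((M ^ k).map C *ᵥ 1)
        = C ((1 : Fin n → ℤ) ⬝ᵥ (M ^ k *ᵥ 1)) := by
      simp [dotProduct, Matrix.mulVec, map_sum]
    rw [h2, ← Matrix.mulVec_mulVec, h1, Matrix.mulVec_sub, Matrix.mulVec_smul, Matrix.mulVec_smul,
      dotProduct_sub, dotProduct_smul, dotProduct_smul, h3, smul_eq_mul, smul_eq_mul]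
  have hdeg : ∀ (M : Matrix (Fin n) (Fin n) ℤ) (k : ℕ), 0 < n →
      ((1 : Fin n → ℤ[X]) ⬝ᵥ ((M ^ k).map C *ᵥ resolventVec M)).natDegree < n := by
    intro M k hn
    refine Nat.lt_of_le_pred hn (natDegree_sum_le_of_forall_le _ _ fun i _ => ?_)
    rw [Pi.one_apply, one_mul, Matrix.mulVec, dotProduct]
    refine natDegree_sum_le_of_forall_le _ _ fun j _ => ?_
    exact (natDegree_C_mul_le _ _).trans (Nat.le_pred_of_lt (natDegree_resolventVec_lt M j))
  have hN : ∀ k, (1 : Fin n → ℤ[X]) ⬝ᵥ ((A ^ k).map C *ᵥ resolventVec A)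
      = 1 ⬝ᵥ ((B ^ k).map C *ᵥ resolventVec B) →
      (1 : Fin n → ℤ) ⬝ᵥ (A ^ k *ᵥ 1) = 1 ⬝ᵥ (B ^ k *ᵥ 1) := by
    intro k hk
    rcases Nat.eq_zero_or_pos n with rfl | hn
    · simp [dotProduct]
    by_contra hne
    have hA := hdeg A (k + 1) hn
    have hB := hdeg B (k + 1) hn
    have h1 : A.charpoly * C ((1 : Fin n → ℤ) ⬝ᵥ (B ^ k *ᵥ 1) - 1 ⬝ᵥ (A ^ k *ᵥ 1))
        = (1 : Fin n → ℤ[X]) ⬝ᵥ ((A ^ (k + 1)).map C *ᵥ resolventVec A)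
          - 1 ⬝ᵥ ((B ^ (k + 1)).map C *ᵥ resolventVec B) := by
      rw [hstep, hstep, hk, hchar, map_sub]; ring
    have h2 := congrArg natDegree h1
    have h3 := natDegree_sub_le ((1 : Fin n → ℤ[X]) ⬝ᵥ ((A ^ (k + 1)).map C *ᵥ resolventVec A))
      (1 ⬝ᵥ ((B ^ (k + 1)).map C *ᵥ resolventVec B))
    rw [natDegree_mul_C (sub_ne_zero.2 (Ne.symm hne)), Matrix.charpoly_natDegree_eq_dim,
      Fintype.card_fin] at h2
    have h4 := max_lt hA hB
    omega
  apply hN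
  induction k with
  | zero => simpa using hres
  | succ k ih => rw [hstep, hstep, ih, hN k ih, hchar]

/-- The characteristic polynomial of `J - I - A`, after the substitution `x ↦ -x-1`, is up to sign
the characteristic polynomial of `A` plus the sum of the entries of `adj(xI - A)`. -/
lemma charpoly_compl_comp {n : ℕ} (A : Matrix (Fin n) (Fin n) ℤ) :
    ((Matrix.of 1 : Matrix (Fin n) (Fin n) ℤ) - 1 - A).charpoly.comp (-X - 1)
      = (-1) ^ n * (A.charpoly + 1 ⬝ᵥ resolventVec A) := by
  have h1 : ((Matrix.of 1 : Matrix (Fin n) (Fin n) ℤ) - 1 - A).charpoly.comp (-X - 1)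
      = (-(A.charmatrix + vecMulVec 1 1)).det := by
    rw [← coe_compRingHom_apply, Matrix.charpoly, RingHom.map_det]
    congr 1
    ext i j : 2
    rw [RingHom.mapMatrix_apply, Matrix.map_apply, coe_compRingHom_apply, Matrix.neg_apply,
      Matrix.add_apply, vecMulVec_apply]
    by_cases hij : i = j
    · subst hij
      simp [charmatrix_apply_eq]
      ring
    · simp [charmatrix_apply_ne _ _ _ hij, Matrix.one_apply_ne hij]
      ring
  rw [h1, Matrix.det_neg, Fintype.card_fin, det_add_vecMulVec_eq _ A.charpoly_monic.ne_zero]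
  rfl

lemma walks_eq_of_genCospectral {n : ℕ} {G H : SimpleGraph (Fin n)} [DecidableRel G.Adj]
    [DecidableRel H.Adj] (h : GenCospectral G H) (k : ℕ) :
    (1 : Fin n → ℤ) ⬝ᵥ (G.adjMatrix ℤ ^ k *ᵥ 1) = 1 ⬝ᵥ (H.adjMatrix ℤ ^ k *ᵥ 1) := by
  refine walks_eq h.1 ?_ k
  have hc : ∀ (K : SimpleGraph (Fin n)) [DecidableRel K.Adj],
      Kᶜ.adjMatrix ℤ = (Matrix.of 1 : Matrix (Fin n) (Fin n) ℤ) - 1 - K.adjMatrix ℤ := by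
    intro K _
    rw [← K.one_add_adjMatrix_add_compl_adjMatrix_eq_of_one ℤ,
      SimpleGraph.compl_adjMatrix_eq_adjMatrix_compl]
    abel
  have h2 := congrArg (fun q => q.comp (-X - 1)) h.2
  simp only [hc, charpoly_compl_comp, h.1] at h2
  exact add_left_cancel (mul_left_cancel₀ (pow_ne_zero n (neg_ne_zero.2 one_ne_zero)) h2)

/-- The Gram matrix of the walk matrix is the Hankel matrix of the walk counts `eᵀAᵏe`. -/
lemma transpose_walkMat_mul_walkMat {n : ℕ} {A : Matrix (Fin n) (Fin n) ℤ} (hA : Aᵀ = A) :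
    (walkMat A)ᵀ * walkMat A
      = Matrix.of fun i j : Fin n => (1 : Fin n → ℤ) ⬝ᵥ (A ^ ((i : ℕ) + j) *ᵥ 1) := by
  ext i j
  rw [of_apply, pow_add, ← Matrix.mulVec_mulVec, Matrix.dotProduct_mulVec,
    ← Matrix.mulVec_transpose, Matrix.transpose_pow, hA]
  rfl

/-- If `A` and `B` have the same characteristic polynomial and `eᵀAᵏe = eᵀBᵏe` for all `k`, with
`W(A)` nonsingular, then `Q = (W(B) W(A)⁻¹)ᵀ` is orthogonal, fixes `e` and satisfies `QᵀAQ = B`. -/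
lemma exists_orthogonal {n : ℕ} {A B : Matrix (Fin n) (Fin n) ℤ} (hA : Aᵀ = A) (hB : Bᵀ = B)
    (hctrl : (walkMat A).det ≠ 0) (hchar : A.charpoly = B.charpoly)
    (hwalk : ∀ k : ℕ, (1 : Fin n → ℤ) ⬝ᵥ (A ^ k *ᵥ 1) = 1 ⬝ᵥ (B ^ k *ᵥ 1)) :
    ∃ Q : Matrix (Fin n) (Fin n) ℚ, Qᵀ * Q = 1 ∧ Q *ᵥ (1 : Fin n → ℚ) = 1 ∧
      Qᵀ * toRat A * Q = toRat B := by
  set W := toRat (walkMat A) with hW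
  set W' := toRat (walkMat B) with hW'
  have hdet : IsUnit W.det := by
    have : W.det = ((walkMat A).det : ℚ) := by
      rw [hW, toRat, ← RingHom.map_det]; rfl
    rw [this, isUnit_iff_ne_zero]
    exact_mod_cast hctrl
  have hgram : Wᵀ * W = W'ᵀ * W' := by
    rw [hW, hW', ← toRat_transpose, ← toRat_transpose, ← toRat_mul, ← toRat_mul,
      transpose_walkMat_mul_walkMat hA, transpose_walkMat_mul_walkMat hB]
    simp only [hwalk]
  set P := W' * W⁻¹ with hP
  have hPW : P * W = W' := by
    rw [hP, Matrix.mul_assoc, Matrix.nonsing_inv_mul _ hdet, Matrix.mul_one]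
  have hPP : Pᵀ * P = 1 := by
    rw [hP, Matrix.transpose_mul, Matrix.mul_assoc, ← Matrix.mul_assoc W'ᵀ, ← hgram,
      Matrix.mul_assoc Wᵀ, Matrix.mul_nonsing_inv _ hdet, Matrix.mul_one, ← Matrix.transpose_mul,
      Matrix.mul_nonsing_inv _ hdet, Matrix.transpose_one]
  have hPP' : P * Pᵀ = 1 := mul_eq_one_comm.1 hPP
  have hPe : P *ᵥ (1 : Fin n → ℚ) = 1 := by
    -- compare first columns in `P W(A) = W(B)`
    ext i
    have hcol : ∀ (M : Matrix (Fin n) (Fin n) ℤ) (r : Fin n),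
        toRat (walkMat M) r ⟨0, i.pos⟩ = 1 := by
      intro M r
      rw [toRat_walkMat_apply]
      simp
    have h1 : ∑ j, P i j * W j ⟨0, i.pos⟩ = W' i ⟨0, i.pos⟩ := by rw [← hPW, Matrix.mul_apply]
    rw [hW, hW', hcol B] at h1
    rw [Matrix.mulVec, dotProduct, Pi.one_apply, ← h1]
    exact Finset.sum_congr rfl fun j _ => by rw [hcol A, Pi.one_apply]
  have hcomm : P * toRat A = toRat B * P := by
    have h1 : P * toRat A * W = toRat B * P * W := by
      rw [Matrix.mul_assoc P, Matrix.mul_assoc (toRat B), hPW, hW, hW', ← toRat_mul, ← toRat_mul,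
        mul_walkMat, mul_walkMat, toRat_mul, toRat_mul, ← Matrix.mul_assoc, ← hW, hPW, hchar]
    have h2 := congrArg (· * W⁻¹) h1
    simpa only [Matrix.mul_assoc, Matrix.mul_nonsing_inv _ hdet, Matrix.mul_one] using h2
  refine ⟨Pᵀ, by rw [Matrix.transpose_transpose, hPP'], ?_, ?_⟩
  · conv_lhs => rw [← hPe]
    rw [Matrix.mulVec_mulVec, hPP, Matrix.one_mulVec]
  · rw [Matrix.transpose_transpose, hcomm, Matrix.mul_assoc, hPP', Matrix.mul_one]

lemma toRat_adjMatrix {n : ℕ} (G : SimpleGraph (Fin n)) [DecidableRel G.Adj] :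
    toRat (G.adjMatrix ℤ) = G.adjMatrix ℚ := by
  ext i j; simp [SimpleGraph.adjMatrix_apply]

lemma isDGS_of_forall_isPermMatrix {n : ℕ} (G : SimpleGraph (Fin n)) [DecidableRel G.Adj]
    (hctrl : (walkMatrix G).det ≠ 0)
    (hperm : ∀ Q : Matrix (Fin n) (Fin n) ℚ, MemQG G Q → IsPermMatrix Q) : IsDGS G := by
  intro H _ hGH
  obtain ⟨Q, hQ, hQe, hQAB⟩ := exists_orthogonal (SimpleGraph.transpose_adjMatrix G)
    (SimpleGraph.transpose_adjMatrix H) hctrl hGH.1 (walks_eq_of_genCospectral hGH)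
  rw [toRat_adjMatrix, toRat_adjMatrix] at hQAB
  obtain ⟨σ, hσ⟩ := hperm Q ⟨hQ, hQe, fun i j => by
    rw [hQAB, SimpleGraph.adjMatrix_apply]
    split_ifs <;> simp⟩
  have hadj : ∀ i j, G.adjMatrix ℚ (σ i) (σ j) = H.adjMatrix ℚ i j := by
    intro i j
    rw [← hQAB, Matrix.mul_apply]
    simp only [Matrix.mul_apply, Matrix.transpose_apply, hσ, ite_mul, mul_ite, one_mul, zero_mul,
      mul_one, mul_zero, Finset.sum_ite_eq', Finset.mem_univ, if_true]
  refine ⟨(⟨σ, fun {i j} => ?_⟩ : H ≃g G).symm⟩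
  have := hadj i j
  simp only [SimpleGraph.adjMatrix_apply] at this
  by_cases h1 : G.Adj (σ i) (σ j) <;> by_cases h2 : H.Adj i j <;> simp_all

/-- **Theorem 1.5 (Wang).** Let `G` be a controllable graph on `n` vertices with walk
matrix `W`.  If `det(W)/2^⌊n/2⌋` is odd and square-free, then `𝒬_G` contains only
permutation matrices, and hence `G` is determined by its generalized spectrum. -/
theorem detW_odd_squarefree_imp_DGS {n : ℕ} (G : SimpleGraph (Fin n))
    [DecidableRel G.Adj] (hctrl : (walkMatrix G).det ≠ 0)
    (hodd : Odd ((walkMatrix G).det / 2 ^ (n / 2)))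
    (hsf : Squarefree ((walkMatrix G).det / 2 ^ (n / 2))) :
    (∀ Q : Matrix (Fin n) (Fin n) ℚ, MemQG G Q → IsPermMatrix Q) ∧ IsDGS G :=
  ⟨isPermMatrix_of_memQG G hctrl hodd hsf,
    isDGS_of_forall_isPermMatrix G hctrl (isPermMatrix_of_memQG G hctrl hodd hsf)⟩
end

section
/- Let G be a controllable simple graph on n vertices with adjacency matrix A and walk matrix W with Smith normal form having n-th elementary divisor d_n. Let Q ∈ Q_G have level ℓ, and let p be a prime. If p divides ℓ, then p divides d_n, and hence p divides det(W). -/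
/-!
For `Q ∈ 𝒬_G` the matrix `B = QᵀAQ` is integral and `Qᵀe = e`, so `QᵀAᵏe = Bᵏe` and therefore
`QᵀW` is the (integral) walk matrix of `B`.  Writing `W = U D V` with `U`, `V` unimodular,
`QᵀU D` is integral; as every `dᵢ` divides `d_n`, also `d_n QᵀU`, and hence `d_n Q`, is integral.
The integers `m` with `m Q` integral are precisely the multiples of the level `ℓ`
(`IsLevel.dvd_of_isIntegerMatrix`), so `ℓ ∣ d_n`, and `d_n` divides `det W = ± ∏ dᵢ`.
-/

open Polynomial Matrix

section IntegerMatrix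

variable {n : ℕ} {M N : Matrix (Fin n) (Fin n) ℚ}

lemma isIntegerMatrix_iff_exists_map :
    IsIntegerMatrix M ↔ ∃ Z : Matrix (Fin n) (Fin n) ℤ, M = Z.map (Int.cast : ℤ → ℚ) := by
  constructor
  · intro h
    choose Z hZ using h
    exact ⟨Z, by ext i j; exact hZ i j⟩
  · rintro ⟨Z, rfl⟩ i j
    exact ⟨Z i j, rfl⟩

lemma isIntegerMatrix_map (Z : Matrix (Fin n) (Fin n) ℤ) :
    IsIntegerMatrix (Z.map (Int.cast : ℤ → ℚ)) := fun i j => ⟨Z i j, rfl⟩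

lemma IsIntegerMatrix.mul (hM : IsIntegerMatrix M) (hN : IsIntegerMatrix N) :
    IsIntegerMatrix (M * N) := by
  obtain ⟨Y, rfl⟩ := isIntegerMatrix_iff_exists_map.1 hM
  obtain ⟨Z, rfl⟩ := isIntegerMatrix_iff_exists_map.1 hN
  exact isIntegerMatrix_iff_exists_map.2 ⟨Y * Z, (Matrix.map_mul_intCast Y Z).symm⟩

lemma IsIntegerMatrix.transpose (hM : IsIntegerMatrix M) : IsIntegerMatrix Mᵀ :=
  fun i j => hM j i

/-- Right multiplication by a unimodular integer matrix reflects integrality, since the inverse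
is `± adjugate`. -/
lemma IsIntegerMatrix.of_mul_unimodular {V : Matrix (Fin n) (Fin n) ℤ}
    (hV : V.det = 1 ∨ V.det = -1)
    (h : IsIntegerMatrix (M * V.map (Int.cast : ℤ → ℚ))) : IsIntegerMatrix M := by
  have h1 := h.mul (isIntegerMatrix_map (V.det • V.adjugate))
  rwa [Matrix.mul_assoc, ← Matrix.map_mul_intCast, Matrix.mul_smul, Matrix.mul_adjugate,
    smul_smul, show V.det * V.det = 1 by rcases hV with h | h <;> simp [h], one_smul,
    Matrix.map_one _ Int.cast_zero Int.cast_one, Matrix.mul_one] at h1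

/-- Minimality of the level upgrades to divisibility, by division with remainder. -/
lemma IsLevel.dvd_of_isIntegerMatrix {Q : Matrix (Fin n) (Fin n) ℚ} {ℓ : ℕ} (hℓ : IsLevel Q ℓ)
    {m : ℤ} (hm : IsIntegerMatrix ((m : ℚ) • Q)) : (ℓ : ℤ) ∣ m := by
  obtain ⟨hpos, hint, hmin⟩ := hℓ
  have hpos' : (0 : ℤ) < ℓ := by exact_mod_cast hpos
  have hr0 := Int.emod_nonneg m hpos'.ne'
  have hrlt := Int.emod_lt_of_pos m hpos'
  obtain ⟨r, hr⟩ := Int.eq_ofNat_of_zero_le hr0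
  rw [Int.dvd_iff_emod_eq_zero]
  by_contra hne
  have hrpos : 0 < r := by omega
  have hle := hmin r hrpos fun i j => by
    obtain ⟨a, ha⟩ := hm i j
    obtain ⟨b, hb⟩ := hint i j
    refine ⟨a - m / ℓ * b, ?_⟩
    have hq : (r : ℚ) = m - ℓ * ((m / ℓ : ℤ) : ℚ) := by
      have : (r : ℤ) = m - ℓ * (m / ℓ) := by rw [← Int.emod_def]; exact hr.symm
      exact_mod_cast this
    simp only [Matrix.smul_apply, smul_eq_mul] at ha hb ⊢
    push_cast
    rw [← ha, ← hb, hq]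
    ring
  omega

end IntegerMatrix

/-- For `Q ∈ 𝒬_G`, the matrix `QᵀW` is integral: its columns are `Bᵏe` with `B = QᵀAQ`. -/
lemma MemQG.isIntegerMatrix_transpose_mul_walkMatrix {n : ℕ} {G : SimpleGraph (Fin n)}
    [DecidableRel G.Adj] {Q : Matrix (Fin n) (Fin n) ℚ} (hQ : MemQG G Q) :
    IsIntegerMatrix (Qᵀ * (walkMatrix G).map (Int.cast : ℤ → ℚ)) := by
  obtain ⟨horth, he, hB⟩ := hQ
  have horth' : Q * Qᵀ = 1 := mul_eq_one_comm.1 horth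
  have hBint : IsIntegerMatrix (Qᵀ * G.adjMatrix ℚ * Q) := fun i j => by
    rcases hB i j with h | h
    · exact ⟨0, by simp [h]⟩
    · exact ⟨1, by simp [h]⟩
  have hQe : (Qᵀ *ᵥ fun _ => (1 : ℚ)) = fun _ => 1 := by
    conv_lhs => rw [← he]
    rw [Matrix.mulVec_mulVec, horth, Matrix.one_mulVec]
  have hwalk : ∀ k : ℕ, ∃ w : Fin n → ℤ,
      Qᵀ *ᵥ (G.adjMatrix ℚ ^ k *ᵥ fun _ => 1) = fun i => (w i : ℚ) := by
    obtain ⟨B, hBZ⟩ := isIntegerMatrix_iff_exists_map.1 hBint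
    intro k
    induction k with
    | zero => exact ⟨fun _ => 1, by simpa using hQe⟩
    | succ k ih =>
      obtain ⟨w, hw⟩ := ih
      refine ⟨B *ᵥ w, ?_⟩
      have hcomm : Qᵀ * G.adjMatrix ℚ = Qᵀ * G.adjMatrix ℚ * Q * Qᵀ := by
        rw [Matrix.mul_assoc _ Q, horth', Matrix.mul_one]
      rw [pow_succ', ← Matrix.mulVec_mulVec, Matrix.mulVec_mulVec, hcomm,
        ← Matrix.mulVec_mulVec, hw, hBZ]
      ext i
      simp [Matrix.mulVec, dotProduct]
  have hadj : G.adjMatrix ℚ = (G.adjMatrix ℤ).map (Int.cast : ℤ → ℚ) := by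
    ext i j
    simp [SimpleGraph.adjMatrix_apply]
  intro i j
  obtain ⟨w, hw⟩ := hwalk j
  refine ⟨w i, ?_⟩
  have hpow : (G.adjMatrix ℤ).map (Int.cast : ℤ → ℚ) ^ (j : ℕ) =
      (G.adjMatrix ℤ ^ (j : ℕ)).map (Int.cast : ℤ → ℚ) :=
    (map_pow (Int.castRingHom ℚ).mapMatrix (G.adjMatrix ℤ) j).symm
  rw [← congrFun hw i, hadj, hpow]
  simp [Matrix.mul_apply, walkMatrix, Matrix.mulVec, dotProduct]

/-- **Lemma 2.4 (Wang).** Let `G` be a controllable graph whose walk matrix `W` has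
Smith normal form with `n`-th elementary divisor `d_n`.  Let `Q ∈ 𝒬_G` have level `ℓ`
and `p` be a prime.  If `p ∣ ℓ`, then `p ∣ d_n` and hence `p ∣ det(W)`. -/
theorem prime_dvd_level_imp_dvd_dn {n : ℕ} (hn : 0 < n) (G : SimpleGraph (Fin n))
    [DecidableRel G.Adj] (hctrl : (walkMatrix G).det ≠ 0)
    (U V : Matrix (Fin n) (Fin n) ℤ) (d : Fin n → ℤ)
    (hU : U.det = 1 ∨ U.det = -1) (hV : V.det = 1 ∨ V.det = -1)
    (hSNF : walkMatrix G = U * Matrix.diagonal d * V)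
    (hchain : ∀ i : Fin n, ∀ h : (i : ℕ) + 1 < n, d i ∣ d ⟨(i : ℕ) + 1, h⟩)
    (Q : Matrix (Fin n) (Fin n) ℚ) (hQ : MemQG G Q) (ℓ : ℕ) (hℓ : IsLevel Q ℓ)
    (p : ℕ) (hp : p.Prime) (hdvd : p ∣ ℓ) :
    (p : ℤ) ∣ d ⟨n - 1, by omega⟩ ∧ (p : ℤ) ∣ (walkMatrix G).det := by
  have hlast : ∀ i : Fin n, d i ∣ d ⟨n - 1, by omega⟩ := by
    have key : ∀ (k i : ℕ) (h : i + k < n), d ⟨i, by omega⟩ ∣ d ⟨i + k, h⟩ := by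
      intro k i
      induction k with
      | zero => intro h; exact dvd_rfl
      | succ k ih => intro h; exact (ih (by omega)).trans (hchain ⟨i + k, by omega⟩ h)
    intro i
    have h := key (n - 1 - i) i (by omega)
    simpa only [show (i : ℕ) + (n - 1 - i) = n - 1 by omega] using h
  have hQUD : IsIntegerMatrix
      (Qᵀ * U.map (Int.cast : ℤ → ℚ) * (Matrix.diagonal d).map (Int.cast : ℤ → ℚ)) := by
    have h := hQ.isIntegerMatrix_transpose_mul_walkMatrix
    rw [hSNF, Matrix.map_mul_intCast, Matrix.map_mul_intCast, ← Matrix.mul_assoc,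
      ← Matrix.mul_assoc] at h
    exact h.of_mul_unimodular hV
  have hQU : IsIntegerMatrix
      (((d ⟨n - 1, by omega⟩ : ℤ) : ℚ) • Qᵀ * U.map (Int.cast : ℤ → ℚ)) := by
    intro i j
    obtain ⟨z, hz⟩ := hQUD i j
    obtain ⟨c, hc⟩ := hlast j
    rw [Matrix.diagonal_map Int.cast_zero, Matrix.mul_diagonal] at hz
    refine ⟨z * c, ?_⟩
    rw [hc, Matrix.smul_mul, Matrix.smul_apply, smul_eq_mul]
    push_cast
    rw [← hz]
    ring
  have hdQ : IsIntegerMatrix (((d ⟨n - 1, by omega⟩ : ℤ) : ℚ) • Q) := by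
    simpa using (hQU.of_mul_unimodular hU).transpose
  have hpd : (p : ℤ) ∣ d ⟨n - 1, by omega⟩ :=
    (Int.natCast_dvd_natCast.2 hdvd).trans (hℓ.dvd_of_isIntegerMatrix hdQ)
  refine ⟨hpd, ?_⟩
  rw [hSNF, Matrix.det_mul, Matrix.det_mul, Matrix.det_diagonal]
  exact ((hpd.trans (Finset.dvd_prod_of_mem d (Finset.mem_univ _))).mul_left _).mul_right _
end

section
/- Let G be a controllable simple graph on n vertices with adjacency matrix A and walk matrix W, let Q ∈ Q_G have level ℓ, and let p be an odd prime. If p divides det(W) but p² does not divide det(W), then p does not divide ℓ. -/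
/-!
Suppose `p ∣ ℓ`. The integer matrix `P = ℓ Q` is nonzero modulo `p`, satisfies `PᵀP = ℓ² I` and
`A P = P B` with `B = QᵀAQ`, and `Pᵀ W` is `ℓ` times an integer matrix, so the columns of `P` lie
in the left kernel of `W` modulo `p`. Since `p² ∤ det W`, this kernel is a line
(`adjugate_mod_ne_zero`, `left_kernel_line`), spanned by a column `u` of `P`, and the column space
of `W` modulo `p` is `u^⊥` (`mem_range_of_orthogonal`). Hence `A u ≡ l u (mod p)` for some `l`,
while `u ⬝ᵥ u` and `u ⬝ᵥ A u` are divisible by `p²`.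

As `u` is isotropic, it lies in the column space of `W` modulo `p`; together with the kernel of `W`
this gives a plane of vectors `x` with `W x ∈ ⟨u⟩`, and so a nonzero such `x` whose last coordinate
is zero (`exists_preimage_line`). For an integral lift of this `x`, the vector `(A - l) W x` equals
`W h` with `h = shift x - l x`. The congruences modulo `p²` place it in `p W ℤⁿ + p² ℤⁿ`, and the
exact divisibility of `det W` by `p` then forces `h ≡ 0 (mod p)`. Reading `h ≡ 0` from the last
coordinate downwards gives `x ≡ 0`, a contradiction (`preimage_line_trivial`).

In terms of lattices over `ℤ_p`: `L = W ℤ_pⁿ` would be `ℤ_pⁿ ∩ Q ℤ_pⁿ`, and `A` would act as a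
scalar on its discriminant group, of order `p²` and exponent `p`; but that group is a cyclic
`ℤ_p[A]`-module.
-/

open Polynomial Matrix

/-! ### Matrices of corank one -/

/-- A square matrix over a field with nonzero adjugate has a left kernel of dimension at most
one: the adjugate entry `(i, j)` is the determinant of `W` with row `j` replaced by a basis
vector, so a left kernel vector vanishing at `j` is killed by an invertible matrix. -/
lemma left_kernel_line {K : Type*} [Field K] {n : ℕ} (W : Matrix (Fin n) (Fin n) K)
    (hadj : W.adjugate ≠ 0) (u : Fin n → K) (hu : u ≠ 0) (huW : u ᵥ* W = 0)
    (y : Fin n → K) (hy : y ᵥ* W = 0) : ∃ c : K, y = c • u := by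
  obtain ⟨i, j, hij⟩ : ∃ i j, W.adjugate i j ≠ 0 := by
    by_contra! h
    exact hadj (Matrix.ext h)
  rw [Matrix.adjugate_apply] at hij
  have key : ∀ y : Fin n → K, y ᵥ* W = 0 → y j = 0 → y = 0 := by
    intro y hy hyj
    by_contra hne
    refine hij (Matrix.exists_vecMul_eq_zero_iff.1 ⟨y, hne, ?_⟩)
    rw [← hy]
    ext k
    simp only [Matrix.vecMul, dotProduct]
    refine Finset.sum_congr rfl fun r _ => ?_
    by_cases hr : r = j
    · subst hr; simp [hyj]
    · rw [Matrix.updateRow_ne hr]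
  have huj : u j ≠ 0 := fun h => hu (key u huW h)
  refine ⟨y j / u j, ?_⟩
  rw [← sub_eq_zero]
  apply key
  · rw [Matrix.sub_vecMul, Matrix.smul_vecMul, hy, huW]; simp
  · simp [huj]

/-- Under the same hypotheses the column space of `W` is the whole of `u^⊥`. -/
lemma mem_range_of_orthogonal {K : Type*} [Field K] {n : ℕ} (W : Matrix (Fin n) (Fin n) K)
    (hadj : W.adjugate ≠ 0) (u : Fin n → K) (hu : u ≠ 0) (huW : u ᵥ* W = 0)
    (s : Fin n → K) (hs : u ⬝ᵥ s = 0) : ∃ t, W *ᵥ t = s := by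
  by_contra hcon
  -- Otherwise a functional kills the range of `W` but not `s`; it is a multiple of `u`.
  have hmem : s ∉ LinearMap.range W.mulVecLin := fun ⟨t, ht⟩ => hcon ⟨t, by simpa using ht⟩
  obtain ⟨f, hf, hf0⟩ := Submodule.exists_dual_map_eq_bot_of_notMem hmem inferInstance
  set y : Fin n → K := fun i => f (Pi.single i 1) with hy
  have hfy : ∀ x, f x = y ⬝ᵥ x := by
    intro x
    conv_lhs => rw [pi_eq_sum_univ' x]
    simp [dotProduct, hy, mul_comm]
  have hyW : y ᵥ* W = 0 := by
    refine dotProduct_eq_zero _ fun t => ?_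
    rw [← Matrix.dotProduct_mulVec, ← hfy]
    have : f (W *ᵥ t) ∈ (LinearMap.range W.mulVecLin).map f :=
      ⟨W *ᵥ t, ⟨t, by simp⟩, rfl⟩
    rw [hf0] at this
    simpa using this
  obtain ⟨c, hc⟩ := left_kernel_line W hadj u hu huW y hyW
  apply hf
  rw [hfy, hc, smul_dotProduct, hs, smul_zero]

/-- If `p` divides `det W` exactly once, then `W` has corank one modulo `p`. -/
lemma adjugate_mod_ne_zero {n p : ℕ} (hp : p.Prime) (W : Matrix (Fin n) (Fin n) ℤ)
    (hdvd : (p : ℤ) ∣ W.det) (hndvd : ¬ (p : ℤ) ^ 2 ∣ W.det) :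
    (W.map (Int.cast : ℤ → ZMod p)).adjugate ≠ 0 := by
  intro h0
  have hpp : Prime (p : ℤ) := Nat.prime_iff_prime_int.1 hp
  have hmap := RingHom.map_adjugate (Int.castRingHom (ZMod p)) W
  have hent : ∀ i j, (p : ℤ) ∣ W.adjugate i j := by
    intro i j
    rw [← ZMod.intCast_zmod_eq_zero_iff_dvd _ p]
    have := congrFun (congrFun hmap i) j
    simpa [h0] using this
  choose N hN using hent
  have hNe : W.adjugate = (p : ℤ) • Matrix.of N := by
    ext i j; simp [hN]
  have hdet := Matrix.det_adjugate W
  obtain ⟨d, hd⟩ := hdvd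
  rw [hNe, Matrix.det_smul, hd, Fintype.card_fin] at hdet
  rcases n with _ | m
  · rw [Matrix.det_fin_zero] at hd
    exact hpp.not_isUnit (IsUnit.of_mul_eq_one _ hd.symm)
  · rw [Nat.add_sub_cancel, mul_pow, pow_succ, mul_assoc] at hdet
    have h1 := mul_left_cancel₀ (pow_ne_zero m hpp.ne_zero) hdet
    have h2 : (p : ℤ) ∣ d := hpp.dvd_of_dvd_pow ⟨_, h1.symm⟩
    apply hndvd
    rw [hd, pow_two]
    exact mul_dvd_mul_left _ h2

/-- When `det W = 0` and `u ⬝ᵥ u = 0`, the vectors sent by `W` into the line of `u` form a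
plane, which therefore meets the hyperplane of vectors with last coordinate zero. -/
lemma exists_preimage_line {K : Type*} [Field K] {m : ℕ}
    (W : Matrix (Fin (m + 1)) (Fin (m + 1)) K)
    (hadj : W.adjugate ≠ 0) (hdet : W.det = 0) (u : Fin (m + 1) → K) (hu : u ≠ 0)
    (huW : u ᵥ* W = 0) (huu : u ⬝ᵥ u = 0) :
    ∃ x : Fin (m + 1) → K, x ≠ 0 ∧ x (Fin.last m) = 0 ∧ ∃ c : K, W *ᵥ x = c • u := by
  obtain ⟨z₀, hz₀, hWz₀⟩ := Matrix.exists_mulVec_eq_zero_iff.2 hdet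
  obtain ⟨z, hz⟩ := mem_range_of_orthogonal W hadj u hu huW u huu
  by_cases h0 : z₀ (Fin.last m) = 0
  · exact ⟨z₀, hz₀, h0, 0, by simp [hWz₀]⟩
  · have hWx : W *ᵥ (z - (z (Fin.last m) / z₀ (Fin.last m)) • z₀) = u := by
      rw [Matrix.mulVec_sub, Matrix.mulVec_smul, hWz₀, hz, smul_zero, sub_zero]
    refine ⟨_, ?_, ?_, 1, by rw [hWx, one_smul]⟩
    · intro h
      rw [h, Matrix.mulVec_zero] at hWx
      exact hu hWx.symm
    · simp [h0]

/-! ### Walk matrices modulo `p` and `p²` -/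

/-- The matrix `[e, Ae, …, A^m e]` intertwines the shift of coordinates with `A`. -/
lemma walk_shift {m : ℕ} (A W : Matrix (Fin (m + 1)) (Fin (m + 1)) ℤ) (e : Fin (m + 1) → ℤ)
    (hW : ∀ i j, W i j = ((A ^ (j : ℕ)) *ᵥ e) i) (x : Fin m → ℤ) :
    W *ᵥ (Fin.cons 0 x : Fin (m + 1) → ℤ) =
      A *ᵥ (W *ᵥ (Fin.snoc x 0 : Fin (m + 1) → ℤ)) := by
  have h1 : W *ᵥ (Fin.cons 0 x : Fin (m + 1) → ℤ) =
      ∑ i, x i • ((A ^ ((i : ℕ) + 1)) *ᵥ e) := by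
    ext k
    simp [Matrix.mulVec, dotProduct, Fin.sum_univ_succ, hW, Finset.sum_apply, mul_comm]
  have h2 : W *ᵥ (Fin.snoc x 0 : Fin (m + 1) → ℤ) = ∑ i, x i • ((A ^ (i : ℕ)) *ᵥ e) := by
    ext k
    simp [Matrix.mulVec, dotProduct, Fin.sum_univ_castSucc, hW, Finset.sum_apply, mul_comm]
  rw [h1, h2, Matrix.mulVec_sum]
  refine Finset.sum_congr rfl fun i _ => ?_
  rw [Matrix.mulVec_smul, Matrix.mulVec_mulVec, pow_succ']

/-- The step that gains a power of `p`: for `W x ≡ c u (mod p)` with last coordinate of `x` zero,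
`(A - l) W x = W h` where `h` is `x` shifted minus `l x`, and `p² ∣ u ⬝ᵥ (A - l) W x`.  Hence
`W h ∈ p W ℤⁿ + p² ℤⁿ`, and since `p` divides `det W` only once, `h ≡ 0`, whence `x ≡ 0`. -/
lemma preimage_line_trivial {m : ℕ} {p : ℤ} (hp : Prime p)
    (A W : Matrix (Fin (m + 1)) (Fin (m + 1)) ℤ) (hA : Aᵀ = A)
    (hshift : ∀ x : Fin m → ℤ, W *ᵥ (Fin.cons 0 x : Fin (m + 1) → ℤ) =
      A *ᵥ (W *ᵥ (Fin.snoc x 0 : Fin (m + 1) → ℤ)))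
    (d : ℤ) (hd : W.det = p * d) (hpd : ¬ p ∣ d)
    (u v : Fin (m + 1) → ℤ) (l : ℤ) (hAu : A *ᵥ u = l • u + p • v)
    (huu : p ^ 2 ∣ u ⬝ᵥ u) (huAu : p ^ 2 ∣ u ⬝ᵥ A *ᵥ u)
    (hrange : ∀ s, p ∣ u ⬝ᵥ s → ∃ t r, s = W *ᵥ t + p • r)
    (x : Fin m → ℤ) (c : ℤ) (y : Fin (m + 1) → ℤ)
    (hx : W *ᵥ (Fin.snoc x 0 : Fin (m + 1) → ℤ) = c • u + p • y) (i : Fin m) : p ∣ x i := by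
  set X : Fin (m + 1) → ℤ := Fin.snoc x 0 with hX
  set h : Fin (m + 1) → ℤ := (Fin.cons 0 x : Fin (m + 1) → ℤ) - l • X with hh
  set s : Fin (m + 1) → ℤ := c • v + A *ᵥ y - l • y with hs
  have hWh : W *ᵥ h = p • s := by
    rw [hh, Matrix.mulVec_sub, Matrix.mulVec_smul, hshift, ← hX, hx, Matrix.mulVec_add,
      Matrix.mulVec_smul, Matrix.mulVec_smul, hAu, hs]
    ext k
    simp only [Pi.add_apply, Pi.sub_apply, Pi.smul_apply, smul_eq_mul]
    ring
  have hsymm : u ⬝ᵥ A *ᵥ y = l * (u ⬝ᵥ y) + p * (v ⬝ᵥ y) := by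
    rw [Matrix.dotProduct_mulVec, ← Matrix.mulVec_transpose, hA, hAu, add_dotProduct,
      smul_dotProduct, smul_dotProduct, smul_eq_mul, smul_eq_mul]
  have hpus : p ∣ u ⬝ᵥ s := by
    have h1 : u ⬝ᵥ A *ᵥ u = l * (u ⬝ᵥ u) + p * (u ⬝ᵥ v) := by
      rw [hAu, dotProduct_add, dotProduct_smul, dotProduct_smul, smul_eq_mul, smul_eq_mul]
    have h2 : p ∣ u ⬝ᵥ v := by
      have h3 : p * p ∣ p * (u ⬝ᵥ v) := by
        rw [← pow_two, ← (eq_sub_of_add_eq' h1.symm).symm]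
        exact dvd_sub huAu (huu.mul_left l)
      exact (mul_dvd_mul_iff_left hp.ne_zero).1 h3
    have h4 : u ⬝ᵥ s = c * (u ⬝ᵥ v) + p * (v ⬝ᵥ y) := by
      rw [hs, dotProduct_sub, dotProduct_add, dotProduct_smul, dotProduct_smul, hsymm,
        smul_eq_mul, smul_eq_mul]
      ring
    rw [h4]
    exact dvd_add (h2.mul_left c) (dvd_mul_right _ _)
  obtain ⟨t, r, htr⟩ := hrange s hpus
  have hdh : ∀ k, p ∣ h k := by
    intro k
    have h1 : W *ᵥ (h - p • t) = (p * p) • r := by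
      rw [Matrix.mulVec_sub, Matrix.mulVec_smul, hWh, htr, smul_add, smul_smul]
      abel
    have h2 : W.adjugate *ᵥ (W *ᵥ (h - p • t)) = (p * d) • (h - p • t) := by
      rw [Matrix.mulVec_mulVec, Matrix.adjugate_mul, Matrix.smul_mulVec, Matrix.one_mulVec, hd]
    rw [h1, Matrix.mulVec_smul] at h2
    have h3 := congrFun h2 k
    simp only [Pi.sub_apply, Pi.smul_apply, smul_eq_mul, mul_assoc] at h3
    have h4 := mul_left_cancel₀ hp.ne_zero h3
    have h5 : p ∣ h k - p * t k := (hp.dvd_or_dvd ⟨_, h4.symm⟩).resolve_left hpd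
    exact (dvd_sub_left (dvd_mul_right p (t k))).1 h5
  have hXk : ∀ k, p ∣ X k := by
    intro k
    induction k using Fin.reverseInduction with
    | last => simp [hX]
    | cast k ih =>
      have h1 := hdh k.succ
      simp only [hh, Pi.sub_apply, Pi.smul_apply, smul_eq_mul, Fin.cons_succ] at h1
      have h2 : X k.castSucc = x k := by simp [hX]
      rw [h2]
      exact (dvd_sub_left (ih.mul_left l)).1 h1
  simpa [hX] using hXk i.castSucc

/-- The integral core: when `p` divides the determinant of the walk matrix `W` exactly once, no
integer matrix `P ≢ 0 (mod p)` has `PᵀP = a I` with `p² ∣ a`, `A P = P B` with `B` integral, and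
`Pᵀ W ≡ 0 (mod p)`. -/
lemma integral_core {m p : ℕ} (hp : p.Prime) (A B W P : Matrix (Fin (m + 1)) (Fin (m + 1)) ℤ)
    (hA : Aᵀ = A) (e : Fin (m + 1) → ℤ) (hW : ∀ i j, W i j = ((A ^ (j : ℕ)) *ᵥ e) i)
    (hdvd : (p : ℤ) ∣ W.det) (hndvd : ¬ (p : ℤ) ^ 2 ∣ W.det)
    (a : ℤ) (ha : (p : ℤ) ^ 2 ∣ a) (hPP : Pᵀ * P = a • 1) (hAP : A * P = P * B)
    (hWP : ∀ i j, (p : ℤ) ∣ (Pᵀ * W) i j) (i₀ j₀ : Fin (m + 1)) (hP : ¬ (p : ℤ) ∣ P i₀ j₀) :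
    False := by
  have : Fact p.Prime := ⟨hp⟩
  have hpp : Prime (p : ℤ) := Nat.prime_iff_prime_int.1 hp
  have hadj := adjugate_mod_ne_zero hp W hdvd hndvd
  set f := Int.castRingHom (ZMod p) with hf
  have hf0 : ∀ z : ℤ, f z = 0 ↔ (p : ℤ) ∣ z := fun z => ZMod.intCast_zmod_eq_zero_iff_dvd z p
  have hfs : ∀ z : ZMod p, ∃ w : ℤ, f w = z := ZMod.intCast_surjective
  have hdet : (W.map f).det = 0 := by
    rw [← RingHom.mapMatrix_apply, ← RingHom.map_det]
    exact (hf0 _).2 hdvd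
  have hker : ∀ j, (f ∘ P.col j) ᵥ* (W.map f) = 0 := by
    intro j
    ext k
    rw [← RingHom.map_vecMul]
    exact (hf0 _).2 (hWP j k)
  -- A vector congruence modulo `p`, lifted to an integral identity.
  have hlift : ∀ g : Fin (m + 1) → ℤ, f ∘ g = 0 → ∃ v : Fin (m + 1) → ℤ, g = (p : ℤ) • v := by
    intro g hg
    have : ∀ i, ∃ v, g i = p * v := fun i => (hf0 _).1 (congrFun hg i)
    choose v hv using this
    exact ⟨v, funext hv⟩
  have hmv : ∀ (M : Matrix (Fin (m + 1)) (Fin (m + 1)) ℤ) (g : Fin (m + 1) → ℤ),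
      f ∘ (M *ᵥ g) = (M.map f) *ᵥ (f ∘ g) := fun M g => funext fun i => RingHom.map_mulVec f M g i
  set u := P.col j₀ with hu
  have hune : f ∘ u ≠ 0 := fun h => hP ((hf0 _).1 (congrFun h i₀))
  have hAu' : A *ᵥ u = P *ᵥ B.col j₀ := by
    ext i
    exact congrFun (congrFun hAP i) j₀
  have huu : u ⬝ᵥ u = a := by
    have h1 : u ⬝ᵥ u = (a • (1 : Matrix (Fin (m + 1)) (Fin (m + 1)) ℤ)) j₀ j₀ :=
      congrFun (congrFun hPP j₀) j₀
    simpa using h1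
  have huAu : u ⬝ᵥ A *ᵥ u = a * B j₀ j₀ := by
    have h1 : Pᵀ * (A * P) = a • B := by
      rw [hAP, ← Matrix.mul_assoc, hPP, Matrix.smul_mul, Matrix.one_mul]
    exact congrFun (congrFun h1 j₀) j₀
  obtain ⟨l, v, hAu⟩ : ∃ (l : ℤ) (v : Fin (m + 1) → ℤ), A *ᵥ u = l • u + (p : ℤ) • v := by
    -- `A u` is a combination of the columns of `P`, all in the left kernel modulo `p`.
    have h1 : (f ∘ (A *ᵥ u)) ᵥ* (W.map f) = 0 := by
      rw [hAu']
      ext k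
      rw [← RingHom.map_vecMul]
      refine (hf0 _).2 ?_
      rw [← Matrix.vecMul_transpose, Matrix.vecMul_vecMul]
      simp only [Matrix.vecMul, dotProduct]
      exact Finset.dvd_sum fun i _ => (hWP i k).mul_left (B.col j₀ i)
    obtain ⟨c, hc⟩ := left_kernel_line _ hadj _ hune (hker j₀) _ h1
    obtain ⟨l, rfl⟩ := hfs c
    obtain ⟨v, hv⟩ := hlift (A *ᵥ u - l • u) (by
      ext i
      have := congrFun hc i
      simp only [Function.comp_apply, Pi.smul_apply, smul_eq_mul] at this
      simp only [Function.comp_apply, Pi.sub_apply, map_sub, this, Pi.smul_apply, smul_eq_mul,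
        map_mul, sub_self, Pi.zero_apply])
    exact ⟨l, v, by rw [← hv]; abel⟩
  have hdot : ∀ s : Fin (m + 1) → ℤ, (p : ℤ) ∣ u ⬝ᵥ s → (f ∘ u) ⬝ᵥ (f ∘ s) = 0 := by
    intro s hs
    rw [← RingHom.map_dotProduct]
    exact (hf0 _).2 hs
  have hrange : ∀ s, (p : ℤ) ∣ u ⬝ᵥ s → ∃ t r, s = W *ᵥ t + (p : ℤ) • r := by
    intro s hs
    obtain ⟨t', ht'⟩ := mem_range_of_orthogonal _ hadj _ hune (hker j₀) (f ∘ s) (hdot s hs)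
    choose t ht using fun i => hfs (t' i)
    obtain ⟨r, hr⟩ := hlift (s - W *ᵥ t) (by
      have h1 := hmv W t
      rw [show f ∘ t = t' from funext ht] at h1
      ext i
      have h2 := congrFun h1 i
      have h3 := congrFun ht' i
      simp only [Function.comp_apply] at h2 h3
      simp only [Function.comp_apply, Pi.sub_apply, map_sub, h2, Pi.zero_apply]
      rw [sub_eq_zero]
      exact h3.symm)
    exact ⟨t, r, by rw [← hr]; abel⟩
  obtain ⟨x', hx'0, hx'l, c', hc'⟩ := exists_preimage_line _ hadj hdet _ hune (hker j₀)
    (hdot u (by rw [huu]; exact (dvd_pow_self _ two_ne_zero).trans ha))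
  choose x hx using fun i : Fin m => hfs (x' i.castSucc)
  obtain ⟨c, rfl⟩ := hfs c'
  have hfx : f ∘ (Fin.snoc x 0 : Fin (m + 1) → ℤ) = x' := by
    ext k
    refine Fin.lastCases ?_ (fun k => ?_) k
    · simp [hx'l]
    · simp [hx]
  obtain ⟨y, hy⟩ := hlift (W *ᵥ (Fin.snoc x 0 : Fin (m + 1) → ℤ) - c • u) (by
    have h1 := hmv W (Fin.snoc x 0 : Fin (m + 1) → ℤ)
    rw [hfx] at h1
    ext i
    have h2 := congrFun h1 i
    have h3 := congrFun hc' i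
    simp only [Function.comp_apply] at h2
    simp only [Function.comp_apply, Pi.sub_apply, map_sub, h2, Pi.zero_apply]
    rw [sub_eq_zero, Pi.smul_apply, smul_eq_mul, map_mul]
    exact h3)
  obtain ⟨d, hd⟩ := hdvd
  have hpd : ¬ (p : ℤ) ∣ d := fun h => hndvd (by
    rw [hd, pow_two]; exact mul_dvd_mul_left _ h)
  have hxdvd := preimage_line_trivial hpp A W hA (walk_shift A W e hW) d hd hpd u v l hAu
    (huu ▸ ha) (huAu ▸ ha.mul_right _) hrange x c y (by rw [← hy]; abel)
  apply hx'0
  rw [← hfx]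
  ext k
  refine Fin.lastCases ?_ (fun k => ?_) k
  · simp
  · simpa using (hf0 _).2 (hxdvd k)

/-! ### Passage from `Q` to integer matrices -/

/-- **Theorem 2.5 (Wang).** Let `G` be a controllable graph with walk matrix `W`, let
`Q ∈ 𝒬_G` have level `ℓ`, and let `p` be an odd prime.  If `p ∣ det(W)` but
`p² ∤ det(W)`, then `p ∤ ℓ`. -/
theorem odd_prime_exactly_dvd_detW_not_dvd_level {n : ℕ} (G : SimpleGraph (Fin n))
    [DecidableRel G.Adj] (hctrl : (walkMatrix G).det ≠ 0)
    (Q : Matrix (Fin n) (Fin n) ℚ) (hQ : MemQG G Q) (ℓ : ℕ) (hℓ : IsLevel Q ℓ)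
    (p : ℕ) (hp : p.Prime) (hodd : p ≠ 2)
    (hdvd : (p : ℤ) ∣ (walkMatrix G).det) (hndvd : ¬ (p : ℤ) ^ 2 ∣ (walkMatrix G).det) :
    ¬ p ∣ ℓ := by
  intro hpl
  have hp0 : (p : ℚ) ≠ 0 := Nat.cast_ne_zero.2 hp.ne_zero
  obtain ⟨hQQ, hQe, hQA⟩ := hQ
  obtain ⟨hℓ0, hint, hmin⟩ := hℓ
  rcases n with _ | m
  · rw [Matrix.det_fin_zero] at hdvd
    exact (Nat.prime_iff_prime_int.1 hp).not_isUnit (isUnit_of_dvd_one hdvd)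
  have hBint : ∀ i j, ∃ z : ℤ, (Qᵀ * G.adjMatrix ℚ * Q) i j = z := by
    intro i j
    rcases hQA i j with h | h
    · exact ⟨0, by simp [h]⟩
    · exact ⟨1, by simp [h]⟩
  choose P' hP' using hint
  choose B' hB' using hBint
  let P : Matrix (Fin (m + 1)) (Fin (m + 1)) ℤ := Matrix.of P'
  let B : Matrix (Fin (m + 1)) (Fin (m + 1)) ℤ := Matrix.of B'
  set c := Int.castRingHom ℚ with hc
  have hPm : P.map c = (ℓ : ℚ) • Q := by
    ext i j; exact (hP' i j).symm
  have hBm : B.map c = Qᵀ * G.adjMatrix ℚ * Q := by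
    ext i j; exact (hB' i j).symm
  have hAm : (G.adjMatrix ℤ).map c = G.adjMatrix ℚ := by
    ext i j
    simp [SimpleGraph.adjMatrix_apply, apply_ite c]
  have hcinj : ∀ M N : Matrix (Fin (m + 1)) (Fin (m + 1)) ℤ, M.map c = N.map c → M = N :=
    fun M N h => Matrix.map_injective Int.cast_injective h
  have hPP : Pᵀ * P = ((ℓ : ℤ) ^ 2) • 1 := by
    apply hcinj
    rw [Matrix.map_mul, Matrix.transpose_map, hPm, Matrix.transpose_smul, Matrix.smul_mul,
      Matrix.mul_smul, hQQ, smul_smul]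
    ext i j
    simp only [Matrix.map_apply, Matrix.smul_apply, Matrix.one_apply, smul_eq_mul, hc]
    split_ifs <;> simp [pow_two]
  have hAP : G.adjMatrix ℤ * P = P * B := by
    apply hcinj
    rw [Matrix.map_mul, Matrix.map_mul, hAm, hPm, hBm, Matrix.mul_smul, Matrix.smul_mul,
      ← Matrix.mul_assoc, ← Matrix.mul_assoc, mul_eq_one_comm.1 hQQ, Matrix.one_mul]
  have hPe : Pᵀ *ᵥ (fun _ => 1) = fun _ => (ℓ : ℤ) := by
    have h1 : Qᵀ *ᵥ (fun _ => 1) = fun _ => (1 : ℚ) := by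
      conv_lhs => rw [← hQe]
      rw [Matrix.mulVec_mulVec, hQQ, Matrix.one_mulVec]
    ext i
    apply Int.cast_injective (α := ℚ)
    have h2 := congrFun h1 i
    simp only [Matrix.mulVec, dotProduct, Matrix.transpose_apply, mul_one] at h2 ⊢
    push_cast
    have h3 : ∀ k, (P k i : ℚ) = ℓ * Q k i := fun k => (hP' k i).symm
    simp only [h3, ← Finset.mul_sum, h2, mul_one]
  have hA : (G.adjMatrix ℤ)ᵀ = G.adjMatrix ℤ := G.transpose_adjMatrix
  -- `Pᵀ` carries the walk vectors of `A` to `ℓ` times those of `Bᵀ`.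
  have hpow : ∀ k : ℕ, Pᵀ * G.adjMatrix ℤ ^ k = Bᵀ ^ k * Pᵀ := by
    have h1 : Pᵀ * G.adjMatrix ℤ = Bᵀ * Pᵀ := by
      have := congrArg Matrix.transpose hAP
      rwa [Matrix.transpose_mul, Matrix.transpose_mul, hA] at this
    exact fun k => (SemiconjBy.pow_right (show SemiconjBy Pᵀ (G.adjMatrix ℤ) Bᵀ from h1) k)
  have hWP : ∀ i j, (p : ℤ) ∣ (Pᵀ * walkMatrix G) i j := by
    intro i j
    have h1 : (Pᵀ * walkMatrix G) i j =
        (Pᵀ *ᵥ ((G.adjMatrix ℤ ^ (j : ℕ)) *ᵥ fun _ => 1)) i := rfl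
    rw [h1, Matrix.mulVec_mulVec, hpow, ← Matrix.mulVec_mulVec, hPe]
    simp only [Matrix.mulVec, dotProduct]
    exact Finset.dvd_sum fun k _ => (Int.natCast_dvd_natCast.2 hpl).mul_left ((Bᵀ ^ (j : ℕ)) i k)
  obtain ⟨i₀, j₀, hne⟩ : ∃ i j, ¬ (p : ℤ) ∣ P i j := by
    by_contra! hall
    obtain ⟨q, rfl⟩ := hpl
    have hq : 0 < q := Nat.pos_of_mul_pos_left hℓ0
    have hle := hmin q hq fun i j => by
      obtain ⟨z, hz⟩ := hall i j
      refine ⟨z, mul_left_cancel₀ hp0 ?_⟩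
      have h1 := hP' i j
      rw [show P' i j = p * z from hz] at h1
      simp only [Matrix.smul_apply, smul_eq_mul] at h1 ⊢
      push_cast at h1
      rw [← h1]; ring
    nlinarith [hp.two_le]
  exact integral_core hp (G.adjMatrix ℤ) B (walkMatrix G) P hA (fun _ => 1) (fun _ _ => rfl)
    hdvd hndvd ((ℓ : ℤ) ^ 2) (pow_dvd_pow_of_dvd (Int.natCast_dvd_natCast.2 hpl) 2) hPP hAP hWP
    i₀ j₀ hne
end
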